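/- arXiv:2507.01534 — 2 statements merged into one kernel-verified Lean document; each statement's English description precedes it below -/
import Mathlib

section
/- Let V be a finite-dimensional complex inner product space and let (ξ_p) be a sequence of self-adjoint endomorphisms of V converging to an endomorphism ξ (necessarily self-adjoint). Then there exist a strictly increasing sequence of indices (p_k), a sequence of unitary operators u_k on V converging to the identity, and a sequence of self-adjoint endomorphisms η_k of V, each commuting with ξ and converging to ξ, such that ξ_{p_k} = u_k ∘ η_k ∘ u_k⁻¹ for every k. -/
open scoped Topology

theorem diag_aux {V : Type*} [NormedAddCommGroup V] [InnerProductSpace ℂ V]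
    [FiniteDimensional ℂ V] (T : V →L[ℂ] V) (hT : IsSelfAdjoint T) :
    ∃ w : V →L[ℂ] V, w ∈ unitary (V →L[ℂ] V) ∧
      ∀ i, ∃ c : ℂ, (star w * T * w) (stdOrthonormalBasis ℂ V i)
        = c • stdOrthonormalBasis ℂ V i := by
  have hS : (T : V →ₗ[ℂ] V).IsSymmetric :=
    ContinuousLinearMap.isSelfAdjoint_iff_isSymmetric.mp hT
  let b := stdOrthonormalBasis ℂ V
  let e := hS.eigenvectorBasis rfl
  let L : V ≃ₗᵢ[ℂ] V := b.equiv e (Equiv.refl _)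
  let W := Unitary.linearIsometryEquiv.symm L
  have hW : ∀ x, (W : V →L[ℂ] V) x = L x := fun x => rfl
  refine ⟨W, W.2, fun i => ⟨hS.eigenvalues rfl i, ?_⟩⟩
  have h1 : (W : V →L[ℂ] V) (b i) = e i := by
    rw [hW]; simp [L]
  have h2 : T (e i) = (hS.eigenvalues rfl i : ℂ) • e i := hS.apply_eigenvectorBasis rfl i
  have h3 : (star (W : V →L[ℂ] V)) (e i) = b i := by
    rw [← h1, ← ContinuousLinearMap.mul_apply, Unitary.star_mul_self_of_mem W.2]; rfl
  change (star (W : V →L[ℂ] V)) (T ((W : V →L[ℂ] V) (b i))) = _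
  rw [h1, h2, map_smul, h3]

theorem exists_subseq_unitary_conj_commuting
    {V : Type*} [NormedAddCommGroup V] [InnerProductSpace ℂ V] [FiniteDimensional ℂ V]
    (ξseq : ℕ → V →L[ℂ] V) (hsa : ∀ p, IsSelfAdjoint (ξseq p))
    (ξ : V →L[ℂ] V) (hconv : Filter.Tendsto ξseq Filter.atTop (𝓝 ξ)) :
    ∃ p : ℕ → ℕ, StrictMono p ∧
    ∃ u : ℕ → V →L[ℂ] V, (∀ k, u k ∈ unitary (V →L[ℂ] V)) ∧
      Filter.Tendsto u Filter.atTop (𝓝 1) ∧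
    ∃ η : ℕ → V →L[ℂ] V, (∀ k, IsSelfAdjoint (η k)) ∧ (∀ k, Commute (η k) ξ) ∧
      Filter.Tendsto η Filter.atTop (𝓝 ξ) ∧
      ∀ k, ξseq (p k) = u k * η k * star (u k) := by
  choose w hwU hwD using fun p => diag_aux (ξseq p) (hsa p)
  have hb : ∀ p, w p ∈ Metric.closedBall (0 : V →L[ℂ] V) 1 := by
    intro p
    rw [mem_closedBall_zero_iff]
    refine ContinuousLinearMap.opNorm_le_bound _ zero_le_one fun x => ?_
    rw [one_mul]
    exact le_of_eq ((Unitary.linearIsometryEquiv ⟨w p, hwU p⟩).norm_map x)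
  haveI : ProperSpace (V →L[ℂ] V) := FiniteDimensional.proper ℂ _
  obtain ⟨W, -, p, hp, hW⟩ := (isCompact_closedBall (0 : V →L[ℂ] V) 1).tendsto_subseq hb
  have hWs : Filter.Tendsto (fun k => star (w (p k))) Filter.atTop (𝓝 (star W)) := hW.star
  have hw1 : ∀ k, star (w k) * w k = 1 := fun k => Unitary.star_mul_self_of_mem (hwU k)
  have hw2 : ∀ k, w k * star (w k) = 1 := fun k => Unitary.mul_star_self_of_mem (hwU k)
  have hW1 : star W * W = 1 := by
    refine tendsto_nhds_unique (hWs.mul hW) ?_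
    simp only [Function.comp, hw1]; exact tendsto_const_nhds
  have hW2 : W * star W = 1 := by
    refine tendsto_nhds_unique (hW.mul hWs) ?_
    simp only [Function.comp, hw2]; exact tendsto_const_nhds
  have hWU : W ∈ unitary (V →L[ℂ] V) := Unitary.mem_iff.mpr ⟨hW1, hW2⟩
  have hξ : Filter.Tendsto (fun k => ξseq (p k)) Filter.atTop (𝓝 ξ) :=
    hconv.comp hp.tendsto_atTop
  let D : ℕ → V →L[ℂ] V := fun k => star (w (p k)) * ξseq (p k) * w (p k)
  have hD : Filter.Tendsto D Filter.atTop (𝓝 (star W * ξ * W)) := (hWs.mul hξ).mul hW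
  have hDD : ∀ k l, D k * D l = D l * D k := by
    intro k l
    apply ContinuousLinearMap.coe_injective
    refine (stdOrthonormalBasis ℂ V).toBasis.ext fun i => ?_
    obtain ⟨c, hc⟩ := hwD (p k) i
    obtain ⟨d, hd⟩ := hwD (p l) i
    have hc' : D k (stdOrthonormalBasis ℂ V i) = c • stdOrthonormalBasis ℂ V i := hc
    have hd' : D l (stdOrthonormalBasis ℂ V i) = d • stdOrthonormalBasis ℂ V i := hd
    rw [OrthonormalBasis.coe_toBasis]
    change D k (D l _) = D l (D k _)
    rw [hc', hd', map_smul, map_smul, hc', hd', smul_comm]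
  have hDξ : ∀ k, D k * (star W * ξ * W) = (star W * ξ * W) * D k := by
    intro k
    refine tendsto_nhds_unique (hD.const_mul (D k)) ?_
    simp only [hDD k]
    exact hD.mul_const (D k)
  have hDsa : ∀ k, IsSelfAdjoint (D k) := fun k => (hsa (p k)).conjugate' _
  have hback : W * (star W * ξ * W) * star W = ξ := by
    calc _ = (W * star W) * ξ * (W * star W) := by noncomm_ring
      _ = ξ := by rw [hW2]; simp
  refine ⟨p, hp, fun k => w (p k) * star W,
    fun k => mul_mem (hwU _) (Unitary.star_mem hWU), ?_,
    fun k => W * D k * star W, fun k => (hDsa k).conjugate _, fun k => ?_, ?_, fun k => ?_⟩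
  · rw [← hW2]; exact hW.mul_const _
  · change W * D k * star W * ξ = ξ * (W * D k * star W)
    set E := star W * ξ * W with hE
    rw [← hback]
    calc _ = W * D k * (star W * W) * E * star W := by noncomm_ring
      _ = W * (D k * E) * star W := by rw [hW1]; noncomm_ring
      _ = W * E * (star W * W) * D k * star W := by rw [hDξ, hW1]; noncomm_ring
      _ = _ := by noncomm_ring
  · have := (hD.const_mul W).mul_const (star W)
    rwa [hback] at this
  · change ξseq (p k) = w (p k) * star W * (W * (star (w (p k)) * ξseq (p k) * w (p k)) * star W)
      * star (w (p k) * star W)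
    rw [star_mul, star_star]
    symm
    calc _ = w (p k) * (star W * W) * star (w (p k)) * ξseq (p k) * w (p k) * (star W * W)
          * star (w (p k)) := by noncomm_ring
      _ = (w (p k) * star (w (p k))) * ξseq (p k) * (w (p k) * star (w (p k))) := by
          rw [hW1]; noncomm_ring
      _ = _ := by rw [hw2]; simp
end

section
/- (Łojasiewicz gradient inequality.) Let E be a finite-dimensional real inner product space, U ⊆ E an open set, and g : E → ℝ a function that is real-analytic on U. Let x ∈ U be a critical point of g, i.e., the gradient of g vanishes at x. Then there exist a neighborhood V of x with V ⊆ U and constants a > 0 and θ with 1/2 ≤ θ < 1 such that for all y ∈ V, a · |g(x) − g(y)|^θ ≤ ‖∇g(y)‖. -/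
open scoped Topology

section LGI_part_A
open Polynomial WithZero IsDedekindDomain

theorem LGI_val_core {k B L : Type*} [Field k] [CharZero k] [CommRing B] [IsDedekindDomain B]
    [Field L] [Algebra k B] [Algebra B L] [IsFractionRing B L] [Algebra k L] [IsScalarTower k B L]
    (v : HeightOneSpectrum B) (hres : ∀ b : B, ∃ c : k, b - algebraMap k B c ∈ v.asIdeal)
    (D : Derivation k L L) (C0 : ℤᵐ⁰) (hC0 : ∀ b : B, v.valuation L (D (algebraMap B L b)) ≤ C0)
    (hD : ∃ b : B, D (algebraMap B L b) ≠ 0) (g : B) (hg : g ∈ v.asIdeal) (hg0 : g ≠ 0) :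
    ∃ e : ℤᵐ⁰, (∀ b : B, v.valuation L (D (algebraMap B L b)) ≤ e) ∧
      v.valuation L (algebraMap B L g) * e < v.valuation L (D (algebraMap B L g)) := by
  classical
  set w := v.valuation L with hw
  obtain ⟨t, ht⟩ := v.intValuation_exists_uniformizer
  have htv : w (algebraMap B L t) = exp (-1) := by rw [hw, v.valuation_of_algebraMap, ht]
  have hle1 : ∀ b : B, w (algebraMap B L b) ≤ 1 := fun b => v.valuation_le_one b
  have hpow : ∀ (n : ℕ) (b : B), b ∈ v.asIdeal ^ n ↔ w (algebraMap B L b) ≤ exp (-(n:ℤ)) := by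
    intro n b
    rw [hw, v.valuation_of_algebraMap, v.intValuation_le_pow_iff_mem]
  have htn : ∀ n : ℕ, w (algebraMap B L (t ^ n)) = exp (-(n:ℤ)) := by
    intro n
    rw [map_pow, map_pow, htv, ← exp_nsmul]; simp
  have hPne : v.asIdeal ≠ ⊥ := v.ne_bot
  have hexp : ∀ (n : ℕ) (m : B), ∃ Q : k[X], m - aeval t Q ∈ v.asIdeal ^ n := by
    intro n m
    induction n with
    | zero => exact ⟨0, by simp⟩
    | succ n ih =>
      obtain ⟨Q, hQ⟩ := ih
      have h1 : t ^ n ∈ v.asIdeal ^ n := (hpow n _).2 (htn n).le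
      have h2 : t ^ n ∉ v.asIdeal ^ (n+1) := by
        rw [hpow, htn, not_le, exp_lt_exp]; push_cast; omega
      obtain ⟨d, e, he, hde⟩ := Ideal.exists_mul_add_mem_pow_succ hPne (t ^ n) _ h1 h2 hQ
      obtain ⟨c, hc⟩ := hres d
      refine ⟨Q + C c * X ^ n, ?_⟩
      have : m - aeval t (Q + C c * X ^ n) = t ^ n * (d - algebraMap k B c) + e := by
        simp only [map_add, map_mul, aeval_C, map_pow, aeval_X]
        linear_combination -hde
      rw [this, pow_succ]
      refine add_mem (Ideal.mul_mem_mul h1 hc) ?_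
      rwa [pow_succ] at he
  have hDr : ∀ (n : ℕ) (r : B), r ∈ v.asIdeal ^ (n+1) → w (D (algebraMap B L r)) ≤ exp (-(n:ℤ)) * C0 := by
    intro n
    induction n with
    | zero => intro r _; simpa using hC0 r
    | succ n ih =>
      intro r hr
      rw [pow_succ] at hr
      refine Submodule.mul_induction_on hr ?_ ?_
      · intro a ha b hb
        have ha' := (hpow _ _).1 ha
        have hb' : w (algebraMap B L b) ≤ exp (-(1:ℤ)) := by
          have := (hpow 1 b).1 (by simpa using hb)
          simpa using this
        rw [map_mul, D.leibniz, smul_eq_mul, smul_eq_mul]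
        refine (w.map_add _ _).trans (max_le ?_ ?_)
        · rw [map_mul]; exact mul_le_mul' ha' (hC0 b)
        · rw [map_mul]
          calc _ ≤ exp (-(1:ℤ)) * (exp (-(n:ℤ)) * C0) := mul_le_mul' hb' (ih a ha)
            _ = _ := by rw [← mul_assoc, ← exp_add]; congr 2; push_cast; ring
      · intro x y hx hy
        rw [map_add, map_add]
        exact (w.map_add _ _).trans (max_le hx hy)
  have hsmall : ∀ e : ℤᵐ⁰, e ≠ 0 → ∃ n0 : ℕ, ∀ n ≥ n0, exp (-(n:ℤ)) * C0 < e := by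
    intro e he
    by_cases hC : C0 = 0
    · exact ⟨0, fun n _ => by rw [hC, mul_zero]; exact zero_lt_iff.2 he⟩
    · obtain ⟨a, rfl⟩ : ∃ a, e = exp a := ⟨log e, (exp_log he).symm⟩
      obtain ⟨c, rfl⟩ : ∃ a, C0 = exp a := ⟨log C0, (exp_log hC).symm⟩
      refine ⟨(c - a).toNat + 1, fun n hn => ?_⟩
      rw [← exp_add, exp_lt_exp]
      omega
  have haev : ∀ Q : k[X], algebraMap B L (aeval t Q) = aeval (algebraMap B L t) Q := fun Q => by
    rw [Polynomial.aeval_algebraMap_apply]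
  have hDQ : ∀ Q : k[X], D (algebraMap B L (aeval t Q)) =
      algebraMap B L (aeval t (derivative Q)) * D (algebraMap B L t) := by
    intro Q
    rw [haev, D.map_aeval, haev, smul_eq_mul]
  set e := w (D (algebraMap B L t)) with hedef
  have hbound : ∀ (b : B) (n : ℕ), w (D (algebraMap B L b)) ≤ max e (exp (-(n:ℤ)) * C0) := by
    intro b n
    obtain ⟨Q, hQ⟩ := hexp (n+1) b
    have h1 := hDr n _ hQ
    have h2 : algebraMap B L b = algebraMap B L (aeval t Q) + algebraMap B L (b - aeval t Q) := by
      rw [← map_add]; congr 1; ring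
    rw [h2, map_add]
    refine (w.map_add _ _).trans (max_le_max ?_ h1)
    rw [hDQ, map_mul]
    exact mul_le_of_le_one_left' (hle1 _)
  have he0 : e ≠ 0 := by
    intro he
    obtain ⟨b, hb⟩ := hD
    have hb' : w (D (algebraMap B L b)) ≠ 0 := by rwa [Valuation.ne_zero_iff]
    obtain ⟨n, hn⟩ := hsmall _ hb'
    have := hbound b n
    rw [he] at this
    have h3 := hn n le_rfl
    rw [max_eq_right zero_le] at this
    exact absurd h3 (not_lt.2 this)
  refine ⟨e, ?_, ?_⟩
  · intro b
    obtain ⟨n, hn⟩ := hsmall e he0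
    exact (hbound b n).trans (max_le le_rfl (hn n le_rfl).le)
  · skip
    have hgw : w (algebraMap B L g) ≠ 0 := by
      rw [Valuation.ne_zero_iff]
      simpa using hg0
    have hgw1 : w (algebraMap B L g) < 1 := by
      rw [hw, v.valuation_lt_one_iff_mem]; exact hg
    set ge := w (algebraMap B L g) * e with hge
    obtain ⟨n1, hn1⟩ := hsmall (ge) (mul_ne_zero hgw he0)
    obtain ⟨ν, hν⟩ : ∃ a, w (algebraMap B L g) = exp a := ⟨_, (exp_log hgw).symm⟩
    set n := max n1 ((-ν).toNat + 1) with hn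
    obtain ⟨Q, hQ⟩ := hexp (n+1) g
    have hDr' := hDr n _ hQ
    have hr := (hpow _ _).1 hQ
    have h2 : algebraMap B L g = algebraMap B L (aeval t Q) + algebraMap B L (g - aeval t Q) := by
      rw [← map_add]; congr 1; ring
    have hrlt : w (algebraMap B L (g - aeval t Q)) < w (algebraMap B L g) := by
      refine hr.trans_lt ?_
      rw [hν, exp_lt_exp]
      have : (-ν).toNat + 1 ≤ n := le_max_right _ _
      omega
    have hQw : w (algebraMap B L (aeval t Q)) = w (algebraMap B L g) := by
      have : algebraMap B L (aeval t Q) = algebraMap B L g - algebraMap B L (g - aeval t Q) := by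
        rw [← map_sub]; congr 1; ring
      rw [this]; exact Valuation.map_sub_eq_of_lt_left _ hrlt
    have hQ0 : Q ≠ 0 := by
      rintro rfl
      simp at hQw
      exact hgw hQw.symm
    obtain ⟨Q1, hQ1, hnd⟩ := Polynomial.exists_eq_pow_rootMultiplicity_mul_and_not_dvd Q hQ0 0
    set a := rootMultiplicity 0 Q with ha
    rw [C_0, sub_zero] at hQ1 hnd
    rw [X_dvd_iff] at hnd
    have hunit : ∀ S : k[X], S.coeff 0 ≠ 0 → w (algebraMap B L (aeval t S)) = 1 := by
      intro S hS
      have h1 : aeval t S = algebraMap k B (S.coeff 0) + t * aeval t S.divX := by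
        conv_lhs => rw [← Polynomial.divX_mul_X_add S]
        simp; ring
      have hc1 : ∀ c : k, c ≠ 0 → w (algebraMap B L (algebraMap k B c)) = 1 := by
        intro c hc
        refine le_antisymm (hle1 _) ?_
        have h3 : w (algebraMap B L (algebraMap k B c)) * w (algebraMap B L (algebraMap k B c⁻¹)) = 1 := by
          rw [← map_mul, ← map_mul, ← map_mul, mul_inv_cancel₀ hc]; simp
        calc 1 = _ := h3.symm
          _ ≤ _ := mul_le_of_le_one_right' (hle1 _)
      rw [h1, map_add]
      rw [Valuation.map_add_eq_of_lt_left]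
      · exact hc1 _ hS
      · rw [hc1 _ hS, map_mul, map_mul, htv]
        calc _ ≤ exp (-1:ℤ) := mul_le_of_le_one_right' (hle1 _)
          _ < exp 0 := by rw [exp_lt_exp]; omega
          _ = 1 := exp_zero
    have hQa : w (algebraMap B L (aeval t Q)) = exp (-(a:ℤ)) := by
      rw [hQ1, map_mul, map_mul, map_mul, hunit _ hnd, mul_one, map_pow, aeval_X, htn]
    have ha1 : 1 ≤ a := by
      by_contra hcon
      have : a = 0 := by omega
      rw [← hQw, hQa, this] at hgw1
      simp at hgw1
    obtain ⟨a', ha'⟩ : ∃ a', a = a' + 1 := ⟨a - 1, by omega⟩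
    have hder : derivative Q = X ^ a' * (C ((a' : k) + 1) * Q1 + X * derivative Q1) := by
      rw [hQ1, ha']
      simp [derivative_mul]
      ring
    have hdQ : w (D (algebraMap B L (aeval t Q))) = exp (-(a':ℤ)) * e := by
      have : ((a':k)+1) ≠ 0 := by exact_mod_cast Nat.succ_ne_zero a'
      rw [hDQ, map_mul, hder, map_mul, map_mul, map_mul,
        hunit (C ((a' : k) + 1) * Q1 + X * derivative Q1), mul_one, map_pow, aeval_X, htn]
      simp [mul_coeff_zero, this, hnd]
    have hlt : ge < exp (-(a':ℤ)) * e := by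
      rw [hge, ← hQw, hQa]
      refine mul_lt_mul_of_pos_right ?_ (zero_lt_iff.2 he0)
      rw [exp_lt_exp, ha']; push_cast; omega
    rw [h2, map_add, Valuation.map_add_eq_of_lt_left]
    · rw [hdQ]; exact hlt
    · rw [hdQ]
      exact hDr'.trans_lt ((hn1 n (le_max_left _ _)).trans hlt)

/-- derivation on `L` extending `d/dX` -/
theorem LGI_exists_derivation (k L : Type*) [Field k] [CharZero k] [Field L]
    [Algebra k L] [Algebra k[X] L] [IsScalarTower k k[X] L]
    [Algebra (FractionRing k[X]) L] [IsScalarTower k[X] (FractionRing k[X]) L]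
    [FiniteDimensional (FractionRing k[X]) L] :
    ∃ D : Derivation k L L, ∀ p : k[X], D (algebraMap k[X] L p) = algebraMap k[X] L (derivative p) := by
  have : CharZero k[X] := inferInstance
  have : CharZero (FractionRing k[X]) := inferInstance
  have : Algebra.FormallyEtale k[X] (FractionRing k[X]) :=
    Algebra.FormallyEtale.of_isLocalization (nonZeroDivisors k[X])
  have : Algebra.FormallyEtale (FractionRing k[X]) L :=
    Algebra.FormallyEtale.of_isSeparable _ _
  have : Algebra.FormallyEtale k[X] L := Algebra.FormallyEtale.comp k[X] (FractionRing k[X]) L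
  let δ : Derivation k k[X] L := (Algebra.linearMap k[X] L).compDer Polynomial.derivative'
  let e := KaehlerDifferential.tensorKaehlerEquivOfFormallyEtale k k[X] L
  let φ : Ω[L⁄k] →ₗ[L] L := (LinearMap.liftBaseChange L δ.liftKaehlerDifferential) ∘ₗ e.symm.toLinearMap
  refine ⟨φ.compDer (KaehlerDifferential.D k L), fun p => ?_⟩
  have h := KaehlerDifferential.tensorKaehlerEquivOfFormallyEtale_symm_D_algebraMap k k[X] L p
  change (LinearMap.liftBaseChange L δ.liftKaehlerDifferential) (e.symm (KaehlerDifferential.D k L (algebraMap k[X] L p))) = _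
  rw [h]
  simp [δ]


theorem LGI_chain {R A σ : Type*} [CommRing R] [CommRing A] [Algebra R A] [Fintype σ]
    (D : Derivation R A A) (x : σ → A) (G : MvPolynomial σ R) :
    D (MvPolynomial.aeval x G) = ∑ j, MvPolynomial.aeval x (MvPolynomial.pderiv j G) * D (x j) := by
  classical
  induction G using MvPolynomial.induction_on with
  | C a => simp
  | add p q hp hq => simp [hp, hq, add_mul, Finset.sum_add_distrib]
  | mul_X p i hp =>
    have h1 : ∀ j, MvPolynomial.aeval x (MvPolynomial.pderiv j (p * MvPolynomial.X i)) * D (x j)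
        = x i * (MvPolynomial.aeval x (MvPolynomial.pderiv j p) * D (x j)) +
          (if j = i then MvPolynomial.aeval x p * D (x j) else 0) := by
      intro j
      rw [Derivation.leibniz, MvPolynomial.pderiv_X]
      by_cases hj : j = i
      · subst hj
        simp
        ring
      · have hj' : i ≠ j := fun h => hj h.symm
        simp [hj, Pi.single_apply, mul_assoc]
    rw [Finset.sum_congr rfl (fun j _ => h1 j), Finset.sum_add_distrib, ← Finset.mul_sum, ← hp]
    simp [Derivation.leibniz]
    ring

theorem LGI_curve_core {k L : Type*} [Field k] [CharZero k] [IsAlgClosed k] [Field L]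
    [Algebra k L] [Algebra k[X] L] [IsScalarTower k k[X] L]
    [Algebra (FractionRing k[X]) L] [IsScalarTower k[X] (FractionRing k[X]) L]
    [FiniteDimensional (FractionRing k[X]) L]
    {σ : Type*} [Fintype σ] (G : MvPolynomial σ k) (x b : σ → integralClosure k[X] L)
    (g : integralClosure k[X] L) (hg0 : g ≠ 0) (hgu : ¬ IsUnit g)
    (hG : MvPolynomial.aeval (fun j => (x j : L)) G = (g : L))
    (hb : ∀ j, MvPolynomial.aeval (fun j => (x j : L)) (MvPolynomial.pderiv j G) = (g : L) * b j) :
    False := by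
  classical
  obtain ⟨D, hD⟩ := LGI_exists_derivation k L
  let B := integralClosure k[X] L
  have : CharZero (FractionRing k[X]) := inferInstance
  have hded : IsDedekindDomain B :=
    IsIntegralClosure.isDedekindDomain k[X] (FractionRing k[X]) L B
  have hfin : Module.Finite k[X] B := IsIntegralClosure.finite k[X] (FractionRing k[X]) L B
  have hfr : IsFractionRing B L :=
    IsIntegralClosure.isFractionRing_of_finite_extension k[X] (FractionRing k[X]) L B
  obtain ⟨P, hPmax, hgP⟩ := exists_max_ideal_of_mem_nonunits (a := g) hgu
  have hP0 : P ≠ ⊥ := by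
    rintro rfl
    exact hg0 (by simpa using hgP)
  let v : HeightOneSpectrum B := ⟨P, hPmax.isPrime, hP0⟩
  have htow : IsScalarTower k k[X] B := inferInstance
  have hft : Algebra.FiniteType k B := Algebra.FiniteType.trans (S := k[X]) inferInstance inferInstance
  have hres : ∀ b : B, ∃ c : k, b - algebraMap k B c ∈ v.asIdeal := by
    intro b
    letI : Field (B ⧸ P) := Ideal.Quotient.field P
    have : Algebra.FiniteType k (B ⧸ P) := inferInstance
    have hfinite : Module.Finite k (B ⧸ P) := finite_of_finite_type_of_isJacobsonRing k (B ⧸ P)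
    have : Algebra.IsIntegral k (B ⧸ P) := inferInstance
    obtain ⟨c, hc⟩ := (IsAlgClosed.algebraMap_bijective_of_isIntegral (k := k) (K := B ⧸ P)).2
      (Ideal.Quotient.mk P b)
    refine ⟨c, ?_⟩
    change b - algebraMap k B c ∈ P
    rw [← Ideal.Quotient.eq_zero_iff_mem, map_sub, ← hc]
    simp
  have hBL : ∀ b : B, algebraMap B L b = (b : L) := fun b => rfl
  have hbound : ∃ C0 : ℤᵐ⁰, ∀ b : B, v.valuation L (D (algebraMap B L b)) ≤ C0 := by
    obtain ⟨s, hs⟩ := hfin.fg_top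
    let C0 : ℤᵐ⁰ := max 1 (s.sup (fun b => v.valuation L (D (algebraMap B L b))))
    refine ⟨C0, fun b => ?_⟩
    have hbs : b ∈ Submodule.span k[X] (s : Set B) := by rw [hs]; trivial
    induction hbs using Submodule.span_induction with
    | mem y hy =>
      exact le_max_of_le_right (Finset.le_sup (f := fun b => v.valuation L (D (algebraMap B L b))) hy)
    | zero => simp
    | add y z _ _ hy hz =>
      rw [map_add, map_add]; exact (Valuation.map_add _ _ _).trans (max_le hy hz)
    | smul p y _ hy =>
      have h1 : algebraMap B L (p • y) = algebraMap k[X] L p * algebraMap B L y := by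
        rw [Algebra.smul_def, map_mul, ← IsScalarTower.algebraMap_apply]
      rw [h1, D.leibniz, hD, smul_eq_mul, smul_eq_mul]
      have hv1 : ∀ q : k[X], v.valuation L (algebraMap k[X] L q) ≤ 1 := fun q => by
        rw [IsScalarTower.algebraMap_apply k[X] B L]; exact v.valuation_le_one _
      refine (Valuation.map_add _ _ _).trans (max_le ?_ ?_)
      · rw [map_mul]; exact (mul_le_of_le_one_left' (hv1 _)).trans hy
      · rw [map_mul]
        refine le_max_of_le_left ?_
        exact mul_le_one' (v.valuation_le_one _) (hv1 _)
  obtain ⟨C0, hC0⟩ := hbound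
  have hD1 : ∃ b : B, D (algebraMap B L b) ≠ 0 := by
    refine ⟨algebraMap k[X] B X, ?_⟩
    rw [← IsScalarTower.algebraMap_apply, hD]
    simp
  obtain ⟨e, he1, he2⟩ := LGI_val_core v hres D C0 hC0 hD1 g hgP hg0
  refine absurd he2 (not_lt.2 ?_)
  rw [hBL, ← hG, LGI_chain, hG]
  refine Valuation.map_sum_le _ (fun j _ => ?_)
  rw [hb, map_mul, map_mul]
  exact mul_le_mul' (mul_le_of_le_one_right' (v.valuation_le_one (b j))) (he1 (x j))

end LGI_part_A

section LGI_part_B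
open Polynomial

theorem LGI_lift_root {A T Ω : Type*} [CommRing A] [IsDomain A] [IsIntegrallyClosed A]
    [CommRing T] [IsDomain T] [Algebra A T] [Algebra.IsIntegral A T]
    (hinj : Function.Injective (algebraMap A T)) [Field Ω] [IsAlgClosed Ω]
    (i : A →+* Ω) (hi : Function.Injective i) (g : T) (w : Ω)
    (hw : (minpoly A g).eval₂ i w = 0) :
    ∃ ψ : T →+* Ω, (∀ a, ψ (algebraMap A T a) = i a) ∧ ψ g = w := by
  let KA := FractionRing A
  let KT := FractionRing T
  letI : Algebra A Ω := i.toAlgebra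
  have : FaithfulSMul A T := (faithfulSMul_iff_algebraMap_injective A T).2 hinj
  have hft : FaithfulSMul A KT := inferInstance
  letI : Algebra KA KT := FractionRing.liftAlgebra A KT
  have : IsScalarTower A KA KT := FractionRing.isScalarTower_liftAlgebra A KT
  have : FaithfulSMul A Ω := (faithfulSMul_iff_algebraMap_injective A Ω).2 hi
  letI : Algebra KA Ω := FractionRing.liftAlgebra A Ω
  have : IsScalarTower A KA Ω := FractionRing.isScalarTower_liftAlgebra A Ω
  have hgi : IsIntegral A g := Algebra.IsIntegral.isIntegral g
  have halg : Algebra.IsAlgebraic KA KT := inferInstance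
  have hmp := minpoly.isIntegrallyClosed_eq_field_fractions KA KT hgi
  obtain ⟨φ, hφ⟩ := IntermediateField.exists_algHom_of_splits_of_aeval (F := KA) (E := KT) (K := Ω)
    (fun s => ⟨(halg.isAlgebraic s).isIntegral, IsAlgClosed.splits _⟩) (x := algebraMap T KT g) (y := w)
    (by rw [hmp, aeval_map_algebraMap]; exact hw)
  refine ⟨φ.toRingHom.comp (algebraMap T KT), fun a => ?_, hφ⟩
  change φ (algebraMap T KT (algebraMap A T a)) = i a
  rw [← IsScalarTower.algebraMap_apply, IsScalarTower.algebraMap_apply A KA KT, AlgHom.commutes,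
    ← IsScalarTower.algebraMap_apply]
  rfl

theorem LGI_to_poly.{u} {F : Type u} [Field F] [CharZero F] {s : ℕ} (c : MvPolynomial (Fin s) F)
    (hc0 : c ≠ 0) (hcu : ¬ IsUnit c) :
    ∃ (k : Type u) (_ : Field k) (_ : CharZero k) (_ : IsAlgClosed k) (κ : F →+* k)
      (τ : MvPolynomial (Fin s) F →+* k[X]), Function.Injective τ ∧ ¬ IsUnit (τ c) ∧
      ∀ a, τ (MvPolynomial.C a) = C (κ a) := by
  have h1 : ∃ i, MvPolynomial.degreeOf i c ≠ 0 := by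
    by_contra! h
    apply hcu
    have : c.totalDegree = 0 := by
      rw [MvPolynomial.totalDegree_eq_zero_iff]
      intro m hm i
      have := MvPolynomial.degreeOf_le_iff.1 (h i).le m hm
      omega
    rw [MvPolynomial.totalDegree_eq_zero_iff_eq_C] at this
    rw [this] at hc0 ⊢
    have h2 : MvPolynomial.coeff 0 c ≠ 0 := by
      intro h; rw [h] at hc0; simp at hc0
    exact (isUnit_iff_ne_zero.2 h2).map MvPolynomial.C
  obtain ⟨i, hi⟩ := h1
  obtain ⟨n, rfl⟩ : ∃ n, s = n + 1 := ⟨s - 1, by have := i.2; omega⟩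
  let A' := MvPolynomial (Fin n) F
  let k := AlgebraicClosure (FractionRing A')
  let e := Equiv.swap i 0
  let j : A' →+* k := (algebraMap (FractionRing A') k).comp (algebraMap A' (FractionRing A'))
  have hj : Function.Injective j :=
    (algebraMap (FractionRing A') k).injective.comp (IsFractionRing.injective A' (FractionRing A'))
  let τ : MvPolynomial (Fin (n+1)) F →+* k[X] :=
    (Polynomial.mapRingHom j).comp
      ((MvPolynomial.finSuccEquiv F n).toRingEquiv.toRingHom.comp
        (MvPolynomial.rename e).toRingHom)
  have hch : CharZero k := inferInstance
  refine ⟨k, inferInstance, hch, inferInstance, j.comp MvPolynomial.C, τ, ?_, ?_, ?_⟩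
  · intro a b hab
    exact MvPolynomial.rename_injective e e.injective
      ((MvPolynomial.finSuccEquiv F n).injective (Polynomial.map_injective j hj hab))
  · intro hu
    have h2 := Polynomial.natDegree_eq_zero_of_isUnit hu
    change (Polynomial.map j (MvPolynomial.finSuccEquiv F n (MvPolynomial.rename e c))).natDegree = 0 at h2
    rw [Polynomial.natDegree_map_eq_of_injective hj, MvPolynomial.natDegree_finSuccEquiv] at h2
    have h3 : (0 : Fin (n+1)) = e i := by simp [e]
    rw [h3, MvPolynomial.degreeOf_rename_of_injective e.injective] at h2
    exact hi h2
  · intro a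
    change Polynomial.map j (MvPolynomial.finSuccEquiv F n (MvPolynomial.rename e (MvPolynomial.C a))) = _
    rw [MvPolynomial.rename_C, MvPolynomial.finSuccEquiv_apply]
    simp

end LGI_part_B

section LGI_part_C
open Polynomial

theorem LGI_PL {F K : Type*} [Field F] [CharZero F] [Field K] [Algebra F K] {m : ℕ}
    (x b : Fin m → K) (G : MvPolynomial (Fin m) F) (g : K) (hg : MvPolynomial.aeval x G = g)
    (hg0 : g ≠ 0)
    (hb : ∀ j, MvPolynomial.aeval x (MvPolynomial.pderiv j G) = g * b j) :
    g⁻¹ ∈ Algebra.adjoin F (Set.range x ∪ Set.range b) := by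
  classical
  let T := Algebra.adjoin F (Set.range x ∪ Set.range b)
  have hxT : ∀ j, x j ∈ T := fun j => Algebra.subset_adjoin (Or.inl ⟨j, rfl⟩)
  have hbT : ∀ j, b j ∈ T := fun j => Algebra.subset_adjoin (Or.inr ⟨j, rfl⟩)
  let x' : Fin m → T := fun j => ⟨x j, hxT j⟩
  let b' : Fin m → T := fun j => ⟨b j, hbT j⟩
  have hxx : ∀ P : MvPolynomial (Fin m) F, ((MvPolynomial.aeval x' P : T) : K) = MvPolynomial.aeval x P := by
    intro P
    have : T.val.comp (MvPolynomial.aeval x') = MvPolynomial.aeval x := by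
      ext j; simp [x']
    rw [← this]; rfl
  let g' : T := MvPolynomial.aeval x' G
  have hg' : (g' : K) = g := by rw [← hg]; exact hxx G
  have hg'0 : g' ≠ 0 := fun h => hg0 (by rw [← hg', h]; rfl)
  have hb' : ∀ j, MvPolynomial.aeval x' (MvPolynomial.pderiv j G) = g' * b' j := by
    intro j
    apply Subtype.ext
    rw [hxx, hb, ← hg']; rfl
  by_contra hcon
  have hgu : ¬ IsUnit g' := by
    intro hu
    obtain ⟨h, hh⟩ := hu.exists_right_inv
    apply hcon
    have : g * (h : K) = 1 := by rw [← hg']; exact congrArg Subtype.val hh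
    rw [← eq_inv_of_mul_eq_one_right this]
    exact h.2
  have hfg : Algebra.FiniteType F T := by
    rw [← Subalgebra.fg_iff_finiteType]
    exact Subalgebra.fg_def.2 ⟨_, (Set.finite_range x).union (Set.finite_range b), rfl⟩
  obtain ⟨s, φ, hφi, hφ⟩ := exists_integral_inj_algHom_of_fg F T
  letI : Algebra (MvPolynomial (Fin s) F) T := φ.toRingHom.toAlgebra
  have hIntg : Algebra.IsIntegral (MvPolynomial (Fin s) F) T := ⟨fun t => hφ t⟩
  have hinj : Function.Injective (algebraMap (MvPolynomial (Fin s) F) T) := hφi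
  have hgi : IsIntegral (MvPolynomial (Fin s) F) g' := hIntg.isIntegral g'
  set A := MvPolynomial (Fin s) F with hA
  set Q := minpoly A g' with hQ
  have hQm : Q.Monic := minpoly.monic hgi
  have haQ : aeval g' Q = 0 := minpoly.aeval A g'
  set c := Q.coeff 0 with hc
  have hdvd : g' ∣ algebraMap A T c := by
    have h1 := Polynomial.X_mul_divX_add Q
    rw [← h1, map_add, map_mul, aeval_X, aeval_C] at haQ
    exact ⟨- aeval g' Q.divX, by linear_combination haQ⟩
  have hcu : ¬ IsUnit c := fun h => hgu (isUnit_of_dvd_unit hdvd (h.map (algebraMap A T)))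
  have hc0 : c ≠ 0 := by
    intro hcz
    have h1 := Polynomial.X_mul_divX_add Q
    rw [← hc, hcz, map_zero, add_zero] at h1
    have h2 : Q.divX.Monic := by
      refine Monic.of_mul_monic_left (p := X) monic_X ?_
      rw [h1]; exact hQm
    rw [← h1, map_mul, aeval_X] at haQ
    have h3 := minpoly.min A g' h2 ((mul_eq_zero.1 haQ).resolve_left hg'0)
    have h4 : Q.degree = 1 + Q.divX.degree := by
      conv_lhs => rw [← h1]
      rw [degree_mul, degree_X]
    rw [← hQ, h4, degree_eq_natDegree h2.ne_zero] at h3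
    norm_cast at h3
    omega
  obtain ⟨k, _, _, _, κ, τ, hτi, hτu, hτC⟩ := LGI_to_poly c hc0 hcu
  let KX := FractionRing k[X]
  let Ω := AlgebraicClosure KX
  let i : A →+* Ω := (algebraMap k[X] Ω).comp τ
  have hkΩ : Function.Injective (algebraMap k[X] Ω) := by
    rw [IsScalarTower.algebraMap_eq k[X] KX Ω]
    exact (algebraMap KX Ω).injective.comp (IsFractionRing.injective k[X] KX)
  have hi : Function.Injective i := hkΩ.comp hτi
  have hspl : (Q.map i).Splits := IsAlgClosed.splits _
  have hQim : (Q.map i).Monic := hQm.map i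
  have hroot : ∃ w ∈ (Q.map i).roots, ¬ IsIntegral k[X] w⁻¹ := by
    by_contra! hall
    apply hτu
    have h1 := hspl.coeff_zero_eq_prod_roots_of_monic hQim
    rw [coeff_map] at h1
    have h2 : IsIntegral k[X] (i c)⁻¹ := by
      rw [← hc] at h1
      rw [h1, mul_inv, ← Multiset.prod_map_inv']
      refine IsIntegral.mul ?_ ?_
      · rw [← inv_pow]
        refine IsIntegral.pow ?_ _
        have : (-1 : Ω)⁻¹ = -1 := by norm_num
        rw [this]; exact isIntegral_one.neg
      · refine IsIntegral.multiset_prod ?_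
        intro y hy
        obtain ⟨w, hw, rfl⟩ := Multiset.mem_map.1 hy
        exact hall w hw
    have hic : i c = algebraMap KX Ω (algebraMap k[X] KX (τ c)) := by
      change algebraMap k[X] Ω (τ c) = _
      rw [IsScalarTower.algebraMap_apply k[X] KX Ω]
    rw [hic, ← map_inv₀, isIntegral_algebraMap_iff (algebraMap KX Ω).injective,
      IsIntegrallyClosed.isIntegral_iff] at h2
    obtain ⟨y, hy⟩ := h2
    have hne : algebraMap k[X] KX (τ c) ≠ 0 := by
      have := (map_ne_zero_iff _ hi).2 hc0
      rw [hic] at this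
      exact (_root_.map_ne_zero _).1 this
    refine IsUnit.of_mul_eq_one y ?_
    apply IsFractionRing.injective k[X] KX
    rw [map_mul, hy, mul_inv_cancel₀ hne, map_one]
  obtain ⟨w, hw, hwi⟩ := hroot
  have hw0 : Q.eval₂ i w = 0 := by
    have := isRoot_of_mem_roots hw
    rwa [IsRoot, eval_map] at this
  obtain ⟨ψ, hψ, hψg⟩ := LGI_lift_root hinj i hi g' w hw0
  have hψint : ∀ t, IsIntegral k[X] (ψ t) := by
    intro t
    obtain ⟨p, hp, hpt⟩ := hIntg.isIntegral t
    refine ⟨p.map τ, hp.map τ, ?_⟩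
    rw [eval₂_map]
    have h1 : (algebraMap k[X] Ω).comp τ = ψ.comp (algebraMap A T) := by
      refine RingHom.ext fun a => (hψ a).symm
    rw [h1, ← hom_eval₂, hpt, map_zero]
  let L : IntermediateField KX Ω := IntermediateField.adjoin KX
    (Set.range (fun j => ψ (x' j)) ∪ Set.range (fun j => ψ (b' j)))
  have hxL : ∀ j, ψ (x' j) ∈ L := fun j => IntermediateField.subset_adjoin _ _ (Or.inl ⟨j, rfl⟩)
  have hbL : ∀ j, ψ (b' j) ∈ L := fun j => IntermediateField.subset_adjoin _ _ (Or.inr ⟨j, rfl⟩)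
  have hLfin : FiniteDimensional KX L := by
    have : Finite ((Set.range (fun j => ψ (x' j)) ∪ Set.range (fun j => ψ (b' j))) : Set Ω) :=
      ((Set.finite_range _).union (Set.finite_range _)).to_subtype
    refine IntermediateField.finiteDimensional_adjoin (fun y _ => ?_)
    exact Algebra.IsIntegral.isIntegral y
  have ht1 : IsScalarTower k[X] L Ω := IsScalarTower.of_algebraMap_eq (fun _ => rfl)
  have ht2 : IsScalarTower k k[X] L := IsScalarTower.of_algebraMap_eq (fun a => by
    apply Subtype.ext
    change algebraMap k Ω a = algebraMap k[X] Ω (algebraMap k k[X] a)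
    rw [← IsScalarTower.algebraMap_apply])
  have hLint : ∀ t : L, IsIntegral k[X] (t : Ω) → IsIntegral k[X] t := by
    intro t ht
    exact (isIntegral_algebraMap_iff (B := Ω) (algebraMap L Ω).injective).1 ht
  let xL : Fin m → integralClosure k[X] L := fun j => ⟨⟨ψ (x' j), hxL j⟩, hLint _ (hψint _)⟩
  let bL : Fin m → integralClosure k[X] L := fun j => ⟨⟨ψ (b' j), hbL j⟩, hLint _ (hψint _)⟩
  have hev : ∀ P : MvPolynomial (Fin m) F,
      ((MvPolynomial.aeval (fun j => (xL j : L)) (MvPolynomial.map κ P) : L) : Ω)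
        = ψ (MvPolynomial.aeval x' P) := by
    intro P
    have h1 : (L.val.toRingHom.comp ((MvPolynomial.aeval (fun j => (xL j : L))).toRingHom.comp
        (MvPolynomial.map κ))) = ψ.comp (MvPolynomial.aeval x').toRingHom := by
      apply MvPolynomial.ringHom_ext
      · intro a
        have h3 : algebraMap F T a = algebraMap A T (MvPolynomial.C a) := by
          change _ = φ (MvPolynomial.C a)
          rw [← MvPolynomial.algebraMap_eq, AlgHom.commutes]
        have h4 : ψ (algebraMap F T a) = algebraMap k[X] Ω (C (κ a)) := by
          rw [h3, hψ]; change algebraMap k[X] Ω (τ _) = _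
          rw [hτC]
        simp [h4]
        rfl
      · intro j
        simp [xL]
    exact RingHom.congr_fun h1 P
  have hwL : w ∈ L := by
    rw [← hψg]; change ψ (MvPolynomial.aeval x' G) ∈ L
    rw [← hev]; exact Subtype.property _
  have hw1 : IsIntegral k[X] w := by rw [← hψg]; exact hψint _
  let gL : integralClosure k[X] L := ⟨⟨w, hwL⟩, hLint _ hw1⟩
  have hwne : w ≠ 0 := by
    rintro rfl
    exact hwi (by simpa using isIntegral_zero)
  refine LGI_curve_core (k := k) (L := L) (MvPolynomial.map κ G) xL bL gL ?_ ?_ ?_ ?_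
  · intro h
    exact hwne (congrArg (fun t : integralClosure k[X] L => ((t : L) : Ω)) h)
  · intro hu
    obtain ⟨h, hh⟩ := hu.exists_right_inv
    apply hwi
    have h1 : w * ((h : L) : Ω) = 1 := congrArg (fun t : integralClosure k[X] L => ((t : L) : Ω)) hh
    rw [← eq_inv_of_mul_eq_one_right h1]
    exact (isIntegral_algebraMap_iff (B := Ω) (algebraMap L Ω).injective).2 h.2
  · apply Subtype.ext
    rw [hev]
    exact hψg
  · intro j
    apply Subtype.ext
    rw [MvPolynomial.pderiv_map, hev, hb' j, map_mul, hψg]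
    rfl

end LGI_part_C

section LGI_part_D
open scoped BoundedContinuousFunction Topology

theorem LGI_shift : ∃ (S B : (ℕ →ᵇ ℝ) →L[ℝ] (ℕ →ᵇ ℝ)) (c0 : (ℕ →ᵇ ℝ) →L[ℝ] ℝ) (e0 : ℕ →ᵇ ℝ),
    ‖S‖ ≤ 1 ∧ B * S = 1 ∧ (∀ y, c0 (S y) = 0) ∧ B e0 = 0 ∧ c0 e0 = 1 := by
  let sf : (ℕ →ᵇ ℝ) → ℕ → ℝ := fun y n => match n with | 0 => 0 | n+1 => y n
  have hsf : ∀ y n, ‖sf y n‖ ≤ ‖y‖ := by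
    intro y n
    cases n with
    | zero => simp [sf]
    | succ n => exact y.norm_coe_le_norm n
  let S0 : (ℕ →ᵇ ℝ) →ₗ[ℝ] (ℕ →ᵇ ℝ) :=
    { toFun := fun y => BoundedContinuousFunction.ofNormedAddCommGroupDiscrete (sf y) ‖y‖ (hsf y)
      map_add' := by
        intro y z; ext n; cases n <;> simp [sf]
      map_smul' := by
        intro c y; ext n; cases n <;> simp [sf] }
  have hS0 : ∀ y, ‖S0 y‖ ≤ 1 * ‖y‖ := by
    intro y; rw [one_mul]
    exact (BoundedContinuousFunction.norm_le (norm_nonneg y)).2 (hsf y)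
  let bf : (ℕ →ᵇ ℝ) → ℕ → ℝ := fun y n => y (n+1)
  have hbf : ∀ y n, ‖bf y n‖ ≤ ‖y‖ := fun y n => y.norm_coe_le_norm _
  let B0 : (ℕ →ᵇ ℝ) →ₗ[ℝ] (ℕ →ᵇ ℝ) :=
    { toFun := fun y => BoundedContinuousFunction.ofNormedAddCommGroupDiscrete (bf y) ‖y‖ (hbf y)
      map_add' := by
        intro y z; ext n; simp [bf]
      map_smul' := by
        intro c y; ext n; simp [bf] }
  have hB0 : ∀ y, ‖B0 y‖ ≤ 1 * ‖y‖ := by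
    intro y; rw [one_mul]
    exact (BoundedContinuousFunction.norm_le (norm_nonneg y)).2 (hbf y)
  let ef : ℕ → ℝ := fun n => if n = 0 then 1 else 0
  have hef : ∀ n, ‖ef n‖ ≤ 1 := by intro n; by_cases h : n = 0 <;> simp [ef, h]
  refine ⟨S0.mkContinuous 1 hS0, B0.mkContinuous 1 hB0, BoundedContinuousFunction.evalCLM ℝ 0,
    BoundedContinuousFunction.ofNormedAddCommGroupDiscrete ef 1 hef,
    LinearMap.mkContinuous_norm_le _ zero_le_one _, ?_, ?_, ?_, ?_⟩
  · ext y n; simp [S0, B0, bf, sf]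
  · intro y; simp [S0, sf]
  · ext n; simp [B0, bf, ef]
  · simp [ef]

theorem LGI_funcalc {E A : Type*} [NormedAddCommGroup E] [NormedSpace ℝ E]
    [NormedRing A] [NormedAlgebra ℝ A] [CompleteSpace A] [NormOneClass A]
    {n : ℕ} (b : Fin n → E) (p : FormalMultilinearSeries ℝ E ℝ) (r : E → ℝ)
    (hp : HasFPowerSeriesAt r p 0) :
    ∃ ρ : ℝ, 0 < ρ ∧ ∃ Ψ : (Fin n → A) → A, AnalyticOnNhd ℝ Ψ (Metric.ball 0 ρ) ∧
      (∀ a ∈ Metric.ball (0 : Fin n → A) ρ, ∀ α : Fin n → ℝ, ‖∑ i, α i • b i‖ < ρ →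
        ∀ l : A →L[ℝ] ℝ, (∀ i T, l (a i * T) = α i * l T) →
          ∀ T, l (Ψ a * T) = r (∑ i, α i • b i) * l T) ∧
      (∀ (α : Fin n → ℝ) (M : A), (fun i => α i • M) ∈ Metric.ball (0 : Fin n → A) ρ →
        HasSum (fun k => p k (fun _ => ∑ i, α i • b i) • M ^ k) (Ψ (fun i => α i • M))) := by
  classical
  let Q : FormalMultilinearSeries ℝ (Fin n → A) A := fun k =>
    ∑ w : Fin k → Fin n, (p k (fun i => b (w i))) •
      (ContinuousMultilinearMap.mkPiAlgebraFin ℝ k A).compContinuousLinearMap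
        (fun i => ContinuousLinearMap.proj (w i))
  have hQ : ∀ k (m : Fin k → Fin n → A), Q k m =
      ∑ w : Fin k → Fin n, (p k (fun i => b (w i))) • (List.ofFn (fun i => m i (w i))).prod := by
    intro k m
    simp [Q, ContinuousMultilinearMap.sum_apply]
  have hpr : 0 < p.radius := by
    obtain ⟨r', hr'⟩ := hp
    exact hr'.r_pos.trans_le hr'.r_le
  obtain ⟨C, t, hC, ht, hpt⟩ := p.le_mul_pow_of_radius_pos hpr
  let D : ℝ := 1 + ∑ i, ‖b i‖
  have hD : 0 < D := by positivity
  have hbD : ∀ i, ‖b i‖ ≤ D := by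
    intro i
    have := Finset.single_le_sum (f := fun i => ‖b i‖) (fun i _ => norm_nonneg _) (Finset.mem_univ i)
    simp only [D]; linarith
  have hmk : ∀ k (m : Fin k → A), ‖(List.ofFn m).prod‖ ≤ ∏ i, ‖m i‖ := by
    intro k m
    have := (ContinuousMultilinearMap.mkPiAlgebraFin ℝ k A).le_opNorm m
    rwa [ContinuousMultilinearMap.norm_mkPiAlgebraFin, one_mul,
      ContinuousMultilinearMap.mkPiAlgebraFin_apply] at this
  have hQn : ∀ k, ‖Q k‖ ≤ C * (n * t * D) ^ k := by
    intro k
    refine ContinuousMultilinearMap.opNorm_le_bound (by positivity) (fun m => ?_)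
    rw [hQ]
    have h1 : ∀ w ∈ (Finset.univ : Finset (Fin k → Fin n)),
        ‖(p k (fun i => b (w i))) • (List.ofFn (fun i => m i (w i))).prod‖ ≤
          (C * t ^ k * D ^ k) * ∏ i, ‖m i‖ := by
      intro w _
      rw [norm_smul]
      refine mul_le_mul ?_ ((hmk k _).trans ?_) (norm_nonneg _) (by positivity)
      · refine ((p k).le_opNorm _).trans ?_
        refine mul_le_mul (hpt k) ?_ (by positivity) (by positivity)
        calc ∏ i, ‖b (w i)‖ ≤ ∏ _i : Fin k, D := Finset.prod_le_prod (fun _ _ => norm_nonneg _) (fun i _ => hbD _)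
          _ = D ^ k := by simp
      · exact Finset.prod_le_prod (fun _ _ => norm_nonneg _) (fun i _ => norm_le_pi_norm (m i) (w i))
    refine (norm_sum_le_of_le _ h1).trans ?_
    simp only [Finset.sum_const, Finset.card_univ, Fintype.card_pi, Fintype.card_fin,
      Finset.prod_const, nsmul_eq_mul, Nat.cast_pow]
    apply le_of_eq
    ring
  have hQr : 0 < Q.radius := by
    let u : NNReal := ⟨(1 + n * t * D)⁻¹, by positivity⟩
    have hu : 0 < u := by
      rw [← NNReal.coe_pos]
      change 0 < (1 + n * t * D)⁻¹
      positivity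
    refine lt_of_lt_of_le (ENNReal.coe_pos.2 hu) (Q.le_radius_of_bound C (fun k => ?_))
    change ‖Q k‖ * ((1 + n * t * D)⁻¹) ^ k ≤ C
    refine (mul_le_mul_of_nonneg_right (hQn k) (by positivity)).trans ?_
    rw [mul_assoc, ← mul_pow]
    refine mul_le_of_le_one_right hC.le (pow_le_one₀ (by positivity) ?_)
    rw [← div_eq_mul_inv, div_le_one (by positivity)]
    linarith
  obtain ⟨ρ1, hρ1, hball⟩ : ∃ ρ1 : ℝ, 0 < ρ1 ∧ Metric.ball (0 : Fin n → A) ρ1 ⊆ Metric.eball 0 Q.radius := by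
    have := Metric.eball_mem_nhds (0 : Fin n → A) hQr
    exact Metric.mem_nhds_iff.1 this
  obtain ⟨ρ2, hρ2, hball2⟩ : ∃ ρ2 : ℝ, 0 < ρ2 ∧ ∀ y : E, ‖y‖ < ρ2 →
      HasSum (fun n => (p n) fun _ => y) (r y) := by
    obtain ⟨ρ2, h1, h2⟩ := Metric.eventually_nhds_iff.1 hp.eventually_hasSum
    refine ⟨ρ2, h1, fun y hy => ?_⟩
    have := h2 (y := y) (by simpa using hy)
    simpa using this
  refine ⟨min ρ1 ρ2, lt_min hρ1 hρ2, Q.sum, ?_, ?_, ?_⟩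
  · exact (Q.hasFPowerSeriesOnBall hQr).analyticOnNhd.mono
      ((Metric.ball_subset_ball (min_le_left _ _)).trans hball)
  · intro a ha α hα l hl T
    have h1 := Q.hasSum (hball (Metric.ball_subset_ball (min_le_left _ _) ha))
    have h2 := hball2 _ (hα.trans_le (min_le_right _ _))
    have h3 := (l.hasSum (h1.mul_right T))
    have h4 := h2.mul_right (l T)
    refine h3.unique ?_
    refine Eq.mp (congrArg (fun f : ℕ → ℝ => HasSum f _) (funext fun k => ?_)) h4
    symm
    rw [hQ, ContinuousMultilinearMap.map_sum, Finset.sum_mul, Finset.sum_mul, map_sum]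
    refine Finset.sum_congr rfl (fun w _ => ?_)
    rw [ContinuousMultilinearMap.map_smul_univ, smul_mul_assoc, map_smul, smul_eq_mul, smul_eq_mul]
    have h5 : ∀ k (w : Fin k → Fin n), l ((List.ofFn (fun i => a (w i))).prod * T) =
        (∏ i, α (w i)) * l T := by
      intro k
      induction k with
      | zero => intro w; simp
      | succ k ih =>
        intro w
        rw [List.ofFn_succ, List.prod_cons, mul_assoc, hl, ih, Fin.prod_univ_succ, mul_assoc]
    rw [h5]; ring
  · intro α M hM
    have h1 := Q.hasSum (hball (Metric.ball_subset_ball (min_le_left _ _) hM))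
    refine Eq.mp (congrArg (fun f : ℕ → A => HasSum f _) (funext fun k => ?_)) h1
    symm
    rw [hQ, ContinuousMultilinearMap.map_sum, Finset.sum_smul]
    refine Finset.sum_congr rfl (fun w _ => ?_)
    rw [ContinuousMultilinearMap.map_smul_univ]
    have h5 : ∀ k (w : Fin k → Fin n), (List.ofFn (fun i => α (w i) • M)).prod =
        (∏ i, α (w i)) • M ^ k := by
      intro k
      induction k with
      | zero => intro w; simp
      | succ k ih =>
        intro w
        rw [List.ofFn_succ, List.prod_cons, ih, Fin.prod_univ_succ, pow_succ', smul_mul_smul_comm]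
    rw [h5, smul_smul, smul_eq_mul, mul_comm]

end LGI_part_D

section LGI_part_E
open scoped BoundedContinuousFunction Topology

theorem LGI_pow_cancel {A : Type*} [Monoid A] {B M : A} (h : B * M = 1) (b k : ℕ) :
    B ^ b * M ^ (k + b) = M ^ k := by
  induction b with
  | zero => simp
  | succ b ih =>
    rw [pow_succ, ← add_assoc, pow_succ' M (k + b), mul_assoc, ← mul_assoc B, h, one_mul, ih]

theorem LGI_weier_abs {E W Y : Type*} [NormedAddCommGroup Y] [NormedSpace ℝ Y] [CompleteSpace Y]
    (S B0 : Y →L[ℝ] Y) (c0 : Y →L[ℝ] ℝ) (e0 : Y) (hS : ‖S‖ ≤ 1) (hBS : B0 * S = 1)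
    (hcS : ∀ y, c0 (S y) = 0) (hBe : B0 e0 = 0) (hce : c0 e0 = 1) [NormedAddCommGroup E] [NormedSpace ℝ E] [FiniteDimensional ℝ E]
    [NormedAddCommGroup W] [NormedSpace ℝ W] (j : W →L[ℝ] E) (v : E) (h : E → ℝ)
    (hh : AnalyticAt ℝ h 0) (hnz : ¬ ∀ᶠ s : ℝ in 𝓝 0, h (s • v) = 0) :
    ∃ b : ℕ, ∀ r : E → ℝ, AnalyticAt ℝ r 0 → ∃ (q : W × ℝ → ℝ) (c : Fin b → W → ℝ),
      AnalyticAt ℝ q 0 ∧ (∀ i, AnalyticAt ℝ (c i) 0) ∧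
      ∀ᶠ z : W × ℝ in 𝓝 0, r (j z.1 + z.2 • v) =
        q z * h (j z.1 + z.2 • v) + ∑ i, c i z.1 * z.2 ^ (i : ℕ) := by
  classical
  obtain ⟨p, hp⟩ := hh
  have hex : ∃ k, p k (fun _ => v) ≠ 0 := by
    by_contra! hall
    apply hnz
    have hc : Filter.Tendsto (fun s : ℝ => s • v) (𝓝 0) (𝓝 0) := by
      have : Continuous (fun s : ℝ => s • v) := by fun_prop
      simpa using this.tendsto 0
    filter_upwards [hc.eventually hp.eventually_hasSum] with s hs
    rw [zero_add] at hs
    refine hs.unique ?_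
    have : (fun n => (p n) fun _ => s • v) = fun _ => 0 := by
      funext n
      rw [ContinuousMultilinearMap.map_smul_univ (p n) (fun _ => s) (fun _ => v), hall, smul_zero]
    rw [this]; exact hasSum_zero
  let b := Nat.find hex
  have hb : p b (fun _ => v) ≠ 0 := Nat.find_spec hex
  have hlt : ∀ k < b, p k (fun _ => v) = 0 := fun k hk => not_not.1 (Nat.find_min hex hk)
  refine ⟨b, fun r hr => ?_⟩
  obtain ⟨pr, hpr⟩ := hr
  let n := Module.finrank ℝ E
  let β : Module.Basis (Fin n) ℝ E := Module.finBasis ℝ E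
  have hnt : Nontrivial Y := ⟨⟨e0, 0, fun he => by simp [he] at hce⟩⟩
  obtain ⟨ρ, hρ, Ψ, hΨa, hΨl, hΨs⟩ := LGI_funcalc (A := (Y →L[ℝ] Y)) β p h hp
  obtain ⟨ρ', hρ', Ψ', hΨa', hΨl', -⟩ := LGI_funcalc (A := (Y →L[ℝ] Y)) β pr r hpr
  have hprad : 0 < p.radius := by
    obtain ⟨r', hr'⟩ := hp
    exact hr'.r_pos.trans_le hr'.r_le
  obtain ⟨C, t, hC, ht, hpt⟩ := p.le_mul_pow_of_radius_pos hprad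
  let τ := t * ‖v‖
  have hτ : 0 ≤ τ := by positivity
  have hpτ : ∀ k, ‖p k (fun _ => v)‖ ≤ C * τ ^ k := by
    intro k
    refine ((p k).le_opNorm _).trans ?_
    simp only [Finset.prod_const, Finset.card_univ, Fintype.card_fin]
    calc ‖p k‖ * ‖v‖ ^ k ≤ C * t ^ k * ‖v‖ ^ k := by gcongr; exact hpt k
      _ = C * τ ^ k := by rw [mul_assoc, ← mul_pow]
  obtain ⟨σ, hσ0, hσ1, hσ2, hσ3, hσ4⟩ : ∃ σ : ℝ, 0 < σ ∧ ‖(fun i => β.repr v i • (σ • S) : Fin n → (Y →L[ℝ] Y))‖ < ρ ∧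
      ‖(fun i => β.repr v i • (σ • S) : Fin n → (Y →L[ℝ] Y))‖ < ρ' ∧ τ * σ < 1/2 ∧
      C * τ ^ b * (τ * σ) * 2 < ‖p b (fun _ => v)‖ := by
    have c1 : Continuous (fun σ : ℝ => ‖(fun i => β.repr v i • (σ • S) : Fin n → (Y →L[ℝ] Y))‖) := by fun_prop
    have z1 : ‖(fun i => β.repr v i • ((0:ℝ) • S) : Fin n → (Y →L[ℝ] Y))‖ = 0 := by
      have z2 : (fun i => β.repr v i • ((0:ℝ) • S) : Fin n → (Y →L[ℝ] Y)) = 0 := by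
        funext i; simp
      rw [z2, norm_zero]
    have c2 : Continuous (fun σ : ℝ => τ * σ) := by fun_prop
    have c3 : Continuous (fun σ : ℝ => C * τ ^ b * (τ * σ) * 2) := by fun_prop
    have e1 : ∀ᶠ σ in 𝓝[>] (0:ℝ), ‖(fun i => β.repr v i • (σ • S) : Fin n → (Y →L[ℝ] Y))‖ < ρ :=
      nhdsWithin_le_nhds ((c1.tendsto 0).eventually_lt_const (by rw [z1]; exact hρ))
    have e2 : ∀ᶠ σ in 𝓝[>] (0:ℝ), ‖(fun i => β.repr v i • (σ • S) : Fin n → (Y →L[ℝ] Y))‖ < ρ' :=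
      nhdsWithin_le_nhds ((c1.tendsto 0).eventually_lt_const (by rw [z1]; exact hρ'))
    have e3 : ∀ᶠ σ in 𝓝[>] (0:ℝ), τ * σ < 1/2 :=
      nhdsWithin_le_nhds ((c2.tendsto 0).eventually_lt_const (by simp))
    have e4 : ∀ᶠ σ in 𝓝[>] (0:ℝ), C * τ ^ b * (τ * σ) * 2 < ‖p b (fun _ => v)‖ :=
      nhdsWithin_le_nhds ((c3.tendsto 0).eventually_lt_const (by simpa using hb))
    have e0 : ∀ᶠ σ in 𝓝[>] (0:ℝ), 0 < σ := self_mem_nhdsWithin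
    obtain ⟨σ, h⟩ := (e0.and (e1.and (e2.and (e3.and e4)))).exists
    exact ⟨σ, h⟩
  let M : (Y →L[ℝ] Y) := σ • S
  let Bk : (Y →L[ℝ] Y) := σ⁻¹ • B0
  have hBM : Bk * M = 1 := by
    simp only [Bk, M, smul_mul_smul_comm, hBS, inv_mul_cancel₀ hσ0.ne', one_smul]
  have hMn : ‖M‖ ≤ σ := by
    simp only [M, norm_smul, Real.norm_eq_abs, abs_of_pos hσ0]
    exact mul_le_of_le_one_right hσ0.le hS
  have hcM : ∀ y, c0 (M y) = 0 := fun y => by simp [M, hcS]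
  have hBke : Bk e0 = 0 := by simp [Bk, hBe]
  change ‖(fun i => β.repr v i • M : Fin n → (Y →L[ℝ] Y))‖ < ρ at hσ1
  change ‖(fun i => β.repr v i • M : Fin n → (Y →L[ℝ] Y))‖ < ρ' at hσ2
  clear_value M Bk
  clear hBS hcS hBe hS
  let a : W → Fin n → (Y →L[ℝ] Y) := fun w i => β.repr (j w) i • (1 : (Y →L[ℝ] Y)) + β.repr v i • M
  have ha0 : a 0 = fun i => β.repr v i • M := by
    funext i; simp [a]
  have haan : AnalyticAt ℝ a 0 := by
    have : a = fun w => (ContinuousLinearMap.pi (fun i =>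
      ((LinearMap.toContinuousLinearMap (β.coord i)).comp j).smulRight (1 : (Y →L[ℝ] Y)))) w
        + fun i => β.repr v i • M := by
      funext w i
      simp [a]
    rw [this]
    exact (ContinuousLinearMap.analyticAt _ _).add analyticAt_const
  let hhat : W → (Y →L[ℝ] Y) := fun w => Ψ (a w)
  let rhat : W → (Y →L[ℝ] Y) := fun w => Ψ' (a w)
  have hhan : AnalyticAt ℝ hhat 0 := by
    refine AnalyticAt.comp (f := a) (g := Ψ) (hΨa (a 0) ?_) haan
    rw [ha0]; simpa using hσ1
  have hran : AnalyticAt ℝ rhat 0 := by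
    refine AnalyticAt.comp (f := a) (g := Ψ') (hΨa' (a 0) ?_) haan
    rw [ha0]; simpa using hσ2
  let Λ : W → (Y →L[ℝ] Y) := fun w => Bk ^ b * hhat w
  have hΛan : AnalyticAt ℝ Λ 0 := analyticAt_const.fun_mul hhan
  have hΛ0 : IsUnit (Λ 0) := by
    have h1 := hΨs (fun i => β.repr v i) M (by simpa using hσ1)
    rw [β.sum_repr] at h1
    have h2 := h1.mul_left (Bk ^ b)
    have h2' : HasSum (fun k => Bk ^ b * ((p k fun _ => v) • M ^ k)) (Λ 0) := by
      have : Λ 0 = Bk ^ b * Ψ (fun i => β.repr v i • M) := by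
        change Bk ^ b * Ψ (a 0) = _
        rw [ha0]
      rw [this]; exact h2
    have h3 := (hasSum_nat_add_iff' b).2 h2'
    have h4 : ∑ i ∈ Finset.range b, Bk ^ b * ((p i fun _ => v) • M ^ i) = 0 := by
      refine Finset.sum_eq_zero (fun i hi => ?_)
      rw [hlt i (Finset.mem_range.1 hi), zero_smul, mul_zero]
    rw [h4, sub_zero] at h3
    have h5 : (fun k => Bk ^ b * ((p (k + b) fun _ => v) • M ^ (k + b))) =
        fun k => (p (k + b) fun _ => v) • M ^ k := by
      funext k
      rw [mul_smul_comm, LGI_pow_cancel hBM]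
    rw [h5] at h3
    have h6 := (hasSum_nat_add_iff' 1).2 h3
    have hpz : ∀ m, m = b → (p m fun _ => v) = p b fun _ => v := by
      intro m hm; subst hm; rfl
    simp only [Finset.range_one, Finset.sum_singleton, pow_zero] at h6
    rw [hpz (0 + b) (zero_add b)] at h6
    have h7 : HasSum (fun k : ℕ => C * τ ^ b * (τ * σ) * (τ * σ) ^ k)
        (C * τ ^ b * (τ * σ) * (1 - τ * σ)⁻¹) :=
      (hasSum_geometric_of_lt_one (by positivity) (by linarith)).mul_left _
    have h8 := h6.norm_le_of_bounded h7 (fun k => by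
      rw [norm_smul]
      calc ‖p (k + 1 + b) fun _ => v‖ * ‖M ^ (k + 1)‖ ≤ (C * τ ^ (k + 1 + b)) * σ ^ (k + 1) := by
            refine mul_le_mul (hpτ _) ?_ (norm_nonneg _) (by positivity)
            exact (norm_pow_le _ _).trans (pow_le_pow_left₀ (norm_nonneg _) hMn _)
        _ = _ := by ring)
    have h9 : (1 - τ * σ)⁻¹ ≤ 2 := by
      rw [inv_le_comm₀ (by linarith) (by norm_num)]
      linarith
    have h10 : ‖Λ 0 - (p b fun _ => v) • (1 : (Y →L[ℝ] Y))‖ < ‖p b fun _ => v‖ := by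
      refine h8.trans_lt (lt_of_le_of_lt ?_ hσ4)
      gcongr
    set d := p b fun _ => v with hd
    have h11 : Λ 0 = d • (1 - (1 - d⁻¹ • Λ 0)) := by
      rw [sub_sub_cancel, smul_smul, mul_inv_cancel₀ hb, one_smul]
    have h12 : ‖1 - d⁻¹ • Λ 0‖ < 1 := by
      have : 1 - d⁻¹ • Λ 0 = - (d⁻¹ • (Λ 0 - d • (1 : (Y →L[ℝ] Y)))) := by
        rw [smul_sub, smul_smul, inv_mul_cancel₀ hb, one_smul, neg_sub]
      rw [this, norm_neg, norm_smul, norm_inv, inv_mul_lt_iff₀ (norm_pos_iff.2 hb), mul_one]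
      exact h10
    rw [h11]
    have h13 := isUnit_one_sub_of_norm_lt_one h12
    rw [Algebra.smul_def]
    exact ((isUnit_iff_ne_zero.2 hb).map (algebraMap ℝ (Y →L[ℝ] Y))).mul h13
  let T : W → (Y →L[ℝ] Y) := fun w => Ring.inverse (Λ w) * (Bk ^ b * rhat w)
  have hTan : AnalyticAt ℝ T 0 := by
    refine AnalyticAt.fun_mul ?_ (analyticAt_const.fun_mul hran)
    obtain ⟨u, hu⟩ := hΛ0
    refine AnalyticAt.comp (f := Λ) (g := Ring.inverse) ?_ hΛan
    rw [← hu]; exact analyticAt_inverse u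
  have hΛu : ∀ᶠ w in 𝓝 (0 : W), IsUnit (Λ w) :=
    hΛan.continuousAt.eventually (Units.isOpen.mem_nhds hΛ0)
  let N : ℝ → (Y →L[ℝ] Y) := fun s => 1 - s • Bk
  have hNan : AnalyticAt ℝ N 0 := analyticAt_const.sub (analyticAt_id.smul analyticAt_const)
  have hN0 : N 0 = 1 := by simp [N]
  have hNu : ∀ᶠ s in 𝓝 (0 : ℝ), IsUnit (N s) :=
    hNan.continuousAt.eventually (Units.isOpen.mem_nhds (by
      change IsUnit (N 0); rw [hN0]; exact isUnit_one))
  let U : ℝ → (Y →L[ℝ] Y) := fun s => Ring.inverse (N s)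
  have hUan : AnalyticAt ℝ U 0 := by
    refine AnalyticAt.comp (f := N) (g := Ring.inverse) ?_ hNan
    rw [hN0]; exact analyticAt_inverse 1
  let l0 : (Y →L[ℝ] Y) →L[ℝ] ℝ := c0.comp (ContinuousLinearMap.apply ℝ Y e0)
  have hl0 : ∀ X, l0 X = c0 (X e0) := fun X => rfl
  let R : W → (Y →L[ℝ] Y) := fun w => hhat w * T w - rhat w
  have hRan : AnalyticAt ℝ R 0 := (hhan.fun_mul hTan).sub hran
  refine ⟨fun z => l0 (U z.2 * T z.1), fun i w => - l0 (Bk ^ (i : ℕ) * R w), ?_, ?_, ?_⟩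
  · refine (ContinuousLinearMap.analyticAt l0 _).comp ?_
    refine AnalyticAt.fun_mul ?_ ?_
    · exact AnalyticAt.comp (f := fun z : W × ℝ => z.2) (g := U) hUan analyticAt_snd
    · exact AnalyticAt.comp (f := fun z : W × ℝ => z.1) (g := T) hTan analyticAt_fst
  · intro i
    refine AnalyticAt.neg ?_
    exact (ContinuousLinearMap.analyticAt l0 _).comp (analyticAt_const.fun_mul hRan)
  have t1 : Filter.Tendsto (fun z : W × ℝ => z.1) (𝓝 0) (𝓝 0) := continuous_fst.tendsto 0
  have t2 : Filter.Tendsto (fun z : W × ℝ => z.2) (𝓝 0) (𝓝 0) := continuous_snd.tendsto 0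
  have t3 : Filter.Tendsto (fun z : W × ℝ => j z.1 + z.2 • v) (𝓝 0) (𝓝 0) := by
    have : Continuous (fun z : W × ℝ => j z.1 + z.2 • v) := by fun_prop
    simpa using this.tendsto 0
  have e1 : ∀ᶠ w in 𝓝 (0 : W), a w ∈ Metric.ball 0 ρ :=
    haan.continuousAt.eventually (Metric.isOpen_ball.mem_nhds (by rw [ha0]; simpa using hσ1))
  have e2 : ∀ᶠ w in 𝓝 (0 : W), a w ∈ Metric.ball 0 ρ' :=
    haan.continuousAt.eventually (Metric.isOpen_ball.mem_nhds (by rw [ha0]; simpa using hσ2))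
  have e3 : ∀ᶠ y in 𝓝 (0 : E), ‖y‖ < ρ := by
    have := Metric.ball_mem_nhds (0 : E) hρ
    filter_upwards [this] with y hy
    simpa using hy
  have e4 : ∀ᶠ y in 𝓝 (0 : E), ‖y‖ < ρ' := by
    have := Metric.ball_mem_nhds (0 : E) hρ'
    filter_upwards [this] with y hy
    simpa using hy
  filter_upwards [t1.eventually hΛu, t2.eventually hNu, t1.eventually e1, t1.eventually e2,
    t3.eventually e3, t3.eventually e4] with z hz1 hz2 hz3 hz4 hz5 hz6
  obtain ⟨w, s⟩ := z
  simp only at hz1 hz2 hz3 hz4 hz5 hz6 ⊢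
  let l : (Y →L[ℝ] Y) →L[ℝ] ℝ := l0.comp (ContinuousLinearMap.mul ℝ (Y →L[ℝ] Y) (U s))
  have hl : ∀ X, l X = l0 (U s * X) := fun X => rfl
  have hUN : U s * N s = 1 := Ring.inverse_mul_cancel _ hz2
  have hlM : ∀ X, l (M * X) = s * l X := by
    intro X
    have k1 : N s * (M * X + s • (U s * X)) = M * X := by
      have k2 : N s * (U s * X) = X := by
        rw [← mul_assoc, Ring.mul_inverse_cancel _ hz2, one_mul]
      rw [mul_add, mul_smul_comm, k2]
      simp only [N, sub_mul, one_mul, smul_mul_assoc]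
      rw [← mul_assoc, hBM, one_mul]; abel
    have k3 : U s * (M * X) = M * X + s • (U s * X) := by
      conv_lhs => rw [← k1]
      rw [← mul_assoc, hUN, one_mul]
    rw [hl, k3, map_add, map_smul, hl, hl0, mul_apply_eq_comp, hcM, zero_add, smul_eq_mul]
  have hla : ∀ i X, l (a w i * X) = (β.repr (j w + s • v) i) * l X := by
    intro i X
    simp only [a, add_mul, smul_mul_assoc, one_mul, map_add, map_smul, hlM, smul_eq_mul,
      Finsupp.add_apply, Finsupp.smul_apply]
    ring
  have hl1 : l 1 = 1 := by
    have k1 : (U s) e0 = e0 := by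
      have : N s e0 = e0 := by simp [N, hBke]
      conv_lhs => rw [← this]
      rw [← mul_apply_eq_comp, hUN, one_apply_eq_self]
    rw [hl, mul_one, hl0, k1, hce]
  have m1 := hΨl (a w) hz3 (fun i => β.repr (j w + s • v) i) (by rw [β.sum_repr]; exact hz5) l hla (T w)
  have m2 := hΨl' (a w) hz4 (fun i => β.repr (j w + s • v) i) (by rw [β.sum_repr]; exact hz6) l hla 1
  rw [β.sum_repr] at m1 m2
  rw [hl1, mul_one, mul_one] at m2
  have hBR : Bk ^ b * R w = 0 := by
    simp only [R, T, mul_sub]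
    rw [← mul_assoc, ← mul_assoc (Bk ^ b * hhat w)]
    change Λ w * Ring.inverse (Λ w) * (Bk ^ b * rhat w) - _ = 0
    rw [Ring.mul_inverse_cancel _ hz1, one_mul, sub_self]
  have m3 : l (R w) = ∑ i : Fin b, s ^ (i : ℕ) * l0 (Bk ^ (i : ℕ) * R w) := by
    have k1 : N s * (∑ i : Fin b, s ^ (i : ℕ) • (Bk ^ (i : ℕ) * R w)) = R w := by
      have k2 : ∑ i : Fin b, s ^ (i : ℕ) • (Bk ^ (i : ℕ) * R w)
          = (∑ i ∈ Finset.range b, (s • Bk) ^ i) * R w := by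
        rw [Finset.sum_range, Finset.sum_mul]
        refine Finset.sum_congr rfl (fun i _ => ?_)
        rw [smul_pow, smul_mul_assoc]
      rw [k2, ← mul_assoc, mul_neg_geom_sum (s • Bk) b, sub_mul, one_mul, smul_pow, smul_mul_assoc,
        hBR, smul_zero, sub_zero]
    have k3 : U s * R w = ∑ i : Fin b, s ^ (i : ℕ) • (Bk ^ (i : ℕ) * R w) := by
      conv_lhs => rw [← k1]
      rw [← mul_assoc, hUN, one_mul]
    rw [hl, k3, map_sum]
    refine Finset.sum_congr rfl (fun i _ => ?_)
    rw [map_smul, smul_eq_mul]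
  have m4 : l (R w) = h (j w + s • v) * l (T w) - r (j w + s • v) := by
    simp only [R, map_sub]
    rw [m1, m2]
  have m5 : ∑ i : Fin b, -l0 (Bk ^ (i : ℕ) * R w) * s ^ (i : ℕ) = - l (R w) := by
    rw [m3, ← Finset.sum_neg_distrib]
    exact Finset.sum_congr rfl (fun i _ => by ring)
  rw [m5, m4, hl]; ring

theorem LGI_weier {E W : Type*} [NormedAddCommGroup E] [NormedSpace ℝ E] [FiniteDimensional ℝ E]
    [NormedAddCommGroup W] [NormedSpace ℝ W] (j : W →L[ℝ] E) (v : E) (h : E → ℝ)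
    (hh : AnalyticAt ℝ h 0) (hnz : ¬ ∀ᶠ s : ℝ in 𝓝 0, h (s • v) = 0) :
    ∃ b : ℕ, ∀ r : E → ℝ, AnalyticAt ℝ r 0 → ∃ (q : W × ℝ → ℝ) (c : Fin b → W → ℝ),
      AnalyticAt ℝ q 0 ∧ (∀ i, AnalyticAt ℝ (c i) 0) ∧
      ∀ᶠ z : W × ℝ in 𝓝 0, r (j z.1 + z.2 • v) =
        q z * h (j z.1 + z.2 • v) + ∑ i, c i z.1 * z.2 ^ (i : ℕ) := by
  obtain ⟨S, B0, c0, e0, hS, hBS, hcS, hBe, hce⟩ := LGI_shift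
  exact LGI_weier_abs S B0 c0 e0 hS hBS hcS hBe hce j v h hh hnz

end LGI_part_E

section LGI_part_F
open scoped Topology

/-- ring of germs at `0` of analytic functions -/
def LGI_An (E : Type*) [NormedAddCommGroup E] [NormedSpace ℝ E] :
    Subring (Filter.Germ (𝓝 (0 : E)) ℝ) where
  carrier := {γ | ∃ f : E → ℝ, AnalyticAt ℝ f 0 ∧ (f : Filter.Germ (𝓝 (0 : E)) ℝ) = γ}
  mul_mem' := by
    rintro _ _ ⟨f, hf, rfl⟩ ⟨g, hg, rfl⟩
    exact ⟨f * g, hf.mul hg, rfl⟩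
  add_mem' := by
    rintro _ _ ⟨f, hf, rfl⟩ ⟨g, hg, rfl⟩
    exact ⟨f + g, hf.add hg, rfl⟩
  zero_mem' := ⟨fun _ => 0, analyticAt_const, rfl⟩
  one_mem' := ⟨fun _ => 1, analyticAt_const, rfl⟩
  neg_mem' := by
    rintro _ ⟨f, hf, rfl⟩
    exact ⟨-f, hf.neg, rfl⟩

section LGI_germs
variable {E F G : Type*} [NormedAddCommGroup E] [NormedSpace ℝ E] [NormedAddCommGroup F]
  [NormedSpace ℝ F] [NormedAddCommGroup G] [NormedSpace ℝ G]

/-- germ of an analytic function -/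
def LGI_mk (f : E → ℝ) (hf : AnalyticAt ℝ f 0) : LGI_An E := ⟨f, f, hf, rfl⟩

theorem LGI_mk_surj (γ : LGI_An E) : ∃ f hf, γ = LGI_mk f hf := by
  obtain ⟨_, f, hf, rfl⟩ := γ
  exact ⟨f, hf, rfl⟩

theorem LGI_mk_eq {f g : E → ℝ} {hf hg} : LGI_mk f hf = LGI_mk g hg ↔ f =ᶠ[𝓝 0] g := by
  exact Subtype.ext_iff.trans Filter.Germ.coe_eq

theorem LGI_mk_add {f g : E → ℝ} (hf hg) : LGI_mk f hf + LGI_mk g hg = LGI_mk (f + g) (hf.add hg) := rfl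
theorem LGI_mk_mul {f g : E → ℝ} (hf hg) : LGI_mk f hf * LGI_mk g hg = LGI_mk (f * g) (hf.mul hg) := rfl
theorem LGI_mk_sub {f g : E → ℝ} (hf hg) : LGI_mk f hf - LGI_mk g hg = LGI_mk (f - g) (hf.sub hg) := rfl

/-- constant germ -/
def LGI_const (c : ℝ) : LGI_An E := LGI_mk (fun _ => c) analyticAt_const

/-- linear function as a germ -/
def LGI_lin (l : E →L[ℝ] ℝ) : LGI_An E := LGI_mk l (l.analyticAt 0)

theorem LGI_comp_an {f : F → ℝ} (hf : AnalyticAt ℝ f 0) (T : E →L[ℝ] F) :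
    AnalyticAt ℝ (fun z => f (T z)) 0 := by
  refine AnalyticAt.comp (g := f) (f := T) ?_ (T.analyticAt 0)
  rwa [map_zero]

theorem LGI_tendsto (T : E →L[ℝ] F) : Filter.Tendsto T (𝓝 0) (𝓝 0) := by
  simpa using T.continuous.tendsto 0

/-- pullback of germs by linear maps -/
def LGI_pb (T : E →L[ℝ] F) : LGI_An F →+* LGI_An E where
  toFun γ := ⟨(γ : Filter.Germ (𝓝 (0 : F)) ℝ).compTendsto T (LGI_tendsto T), by
    obtain ⟨f, hf, rfl⟩ := LGI_mk_surj γ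
    exact ⟨fun z => f (T z), LGI_comp_an hf T, rfl⟩⟩
  map_one' := rfl
  map_zero' := rfl
  map_mul' := by
    intro a b
    obtain ⟨f, hf, rfl⟩ := LGI_mk_surj a
    obtain ⟨g, hg, rfl⟩ := LGI_mk_surj b
    rfl
  map_add' := by
    intro a b
    obtain ⟨f, hf, rfl⟩ := LGI_mk_surj a
    obtain ⟨g, hg, rfl⟩ := LGI_mk_surj b
    rfl

theorem LGI_pb_mk (T : E →L[ℝ] F) {f : F → ℝ} (hf) :
    LGI_pb T (LGI_mk f hf) = LGI_mk (fun z => f (T z)) (LGI_comp_an hf T) := rfl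

theorem LGI_der_an {f : E → ℝ} (hf : AnalyticAt ℝ f 0) (v : E) :
    AnalyticAt ℝ (fun z => fderiv ℝ f z v) 0 :=
  ((ContinuousLinearMap.apply ℝ ℝ v).analyticAt _).comp hf.fderiv

/-- derivative of a germ as a function -/
noncomputable def LGI_derFun (v : E) (γ : LGI_An E) : LGI_An E :=
  LGI_mk (fun z => fderiv ℝ (Classical.choose (LGI_mk_surj γ)) z v)
    (LGI_der_an (Classical.choose (Classical.choose_spec (LGI_mk_surj γ))) v)

theorem LGI_derFun_mk (v : E) {f : E → ℝ} (hf) :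
    LGI_derFun v (LGI_mk f hf) = LGI_mk (fun z => fderiv ℝ f z v) (LGI_der_an hf v) := by
  have h := Classical.choose_spec (Classical.choose_spec (LGI_mk_surj (LGI_mk f hf)))
  rw [LGI_mk_eq] at h
  unfold LGI_derFun
  rw [LGI_mk_eq]
  filter_upwards [h.symm.fderiv (𝕜 := ℝ)] with z hz
  rw [hz]

/-- directional derivative as a derivation of the germ ring -/
noncomputable def LGI_der (v : E) : Derivation ℤ (LGI_An E) (LGI_An E) :=
  Derivation.mk'
    (AddMonoidHom.toIntLinearMap (AddMonoidHom.mk' (LGI_derFun v) (by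
        intro a b
        obtain ⟨f, hf, rfl⟩ := LGI_mk_surj a
        obtain ⟨g, hg, rfl⟩ := LGI_mk_surj b
        rw [LGI_mk_add, LGI_derFun_mk, LGI_derFun_mk, LGI_derFun_mk, LGI_mk_add, LGI_mk_eq]
        filter_upwards [hf.eventually_analyticAt, hg.eventually_analyticAt] with z h1 h2
        rw [fderiv_add h1.differentiableAt h2.differentiableAt]
        rfl)))
    (by
      intro a b
      obtain ⟨f, hf, rfl⟩ := LGI_mk_surj a
      obtain ⟨g, hg, rfl⟩ := LGI_mk_surj b
      change LGI_derFun v _ = LGI_mk f hf * LGI_derFun v _ + LGI_mk g hg * LGI_derFun v _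
      rw [LGI_mk_mul, LGI_derFun_mk, LGI_derFun_mk, LGI_derFun_mk, LGI_mk_mul, LGI_mk_mul,
        LGI_mk_add, LGI_mk_eq]
      filter_upwards [hf.eventually_analyticAt, hg.eventually_analyticAt] with z h1 h2
      rw [fderiv_mul h1.differentiableAt h2.differentiableAt]
      rfl)

theorem LGI_der_mk (v : E) {f : E → ℝ} (hf) :
    LGI_der v (LGI_mk f hf) = LGI_mk (fun z => fderiv ℝ f z v) (LGI_der_an hf v) :=
  LGI_derFun_mk v hf

theorem LGI_der_pb (T : E →L[ℝ] F) (v : E) (γ : LGI_An F) :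
    LGI_der v (LGI_pb T γ) = LGI_pb T (LGI_der (T v) γ) := by
  obtain ⟨f, hf, rfl⟩ := LGI_mk_surj γ
  rw [LGI_pb_mk, LGI_der_mk, LGI_der_mk, LGI_pb_mk, LGI_mk_eq]
  filter_upwards [(LGI_tendsto T).eventually hf.eventually_analyticAt] with z hz
  have : fderiv ℝ (fun z => f (T z)) z = (fderiv ℝ f (T z)).comp T := by
    have := (hz.differentiableAt.hasFDerivAt.comp z T.hasFDerivAt).fderiv
    exact this
  rw [this]; rfl

theorem LGI_der_zero (γ : LGI_An E) : LGI_der 0 γ = 0 := by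
  obtain ⟨f, hf, rfl⟩ := LGI_mk_surj γ
  rw [LGI_der_mk]
  change _ = LGI_mk (fun _ => 0) analyticAt_const
  rw [LGI_mk_eq]
  filter_upwards with z
  simp

theorem LGI_der_lin (v : E) (l : E →L[ℝ] ℝ) :
    LGI_der v (LGI_lin l) = LGI_const (l v) := by
  rw [LGI_lin, LGI_der_mk, LGI_const, LGI_mk_eq]
  filter_upwards with z
  rw [l.fderiv]

theorem LGI_isUnit {f : E → ℝ} (hf : AnalyticAt ℝ f 0) (h0 : f 0 ≠ 0) : IsUnit (LGI_mk f hf) := by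
  refine IsUnit.of_mul_eq_one (LGI_mk f⁻¹ (hf.inv h0)) ?_
  rw [LGI_mk_mul]
  change _ = LGI_mk (fun _ => 1) analyticAt_const
  rw [LGI_mk_eq]
  filter_upwards [hf.continuousAt.eventually_ne h0] with z hz
  simp [hz]

end LGI_germs

end LGI_part_F

section LGI_part_G
open scoped Topology

theorem LGI_sum_mk {E ι : Type*} [NormedAddCommGroup E] [NormedSpace ℝ E] (s : Finset ι)
    (f : ι → E → ℝ) (hf : ∀ i, AnalyticAt ℝ (f i) 0) :
    ∑ i ∈ s, LGI_mk (f i) (hf i) = LGI_mk (fun z => ∑ i ∈ s, f i z)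
      (Finset.analyticAt_fun_sum s (fun i _ => hf i)) := by
  classical
  induction s using Finset.induction_on with
  | empty => simp; rfl
  | insert a s ha ih =>
    rw [Finset.sum_insert ha, ih, LGI_mk_add, LGI_mk_eq]
    filter_upwards with z
    rw [Finset.sum_insert ha]; rfl

theorem LGI_pow_mk {E : Type*} [NormedAddCommGroup E] [NormedSpace ℝ E]
    (f : E → ℝ) (hf : AnalyticAt ℝ f 0) (n : ℕ) :
    LGI_mk f hf ^ n = LGI_mk (fun z => f z ^ n) (hf.fun_pow n) := by
  induction n with
  | zero => simp; rfl
  | succ n ih =>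
    rw [pow_succ, ih, LGI_mk_mul, LGI_mk_eq]
    filter_upwards with z
    simp [pow_succ]

section
variable {E W : Type*} [NormedAddCommGroup E] [NormedSpace ℝ E] [FiniteDimensional ℝ E]
  [NormedAddCommGroup W] [NormedSpace ℝ W]

theorem LGI_weier_germ (j : W →L[ℝ] E) (v : E) (π : E →L[ℝ] W) (l : E →L[ℝ] ℝ)
    (hz : ∀ z, j (π z) + l z • v = z) (h : LGI_An E)
    (hh : LGI_pb (ContinuousLinearMap.toSpanSingleton ℝ v) h ≠ 0) :
    ∃ b : ℕ, ∀ r : LGI_An E, ∃ (q : LGI_An E) (c : Fin b → LGI_An W),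
      r = q * h + ∑ i, LGI_pb π (c i) * LGI_lin l ^ (i : ℕ) := by
  obtain ⟨f, hf, rfl⟩ := LGI_mk_surj h
  have hnz : ¬ ∀ᶠ s : ℝ in 𝓝 0, f (s • v) = 0 := by
    intro hc
    apply hh
    rw [LGI_pb_mk]
    change _ = LGI_mk (fun _ => 0) analyticAt_const
    rw [LGI_mk_eq]
    exact hc
  obtain ⟨b, hb⟩ := LGI_weier j v f hf hnz
  refine ⟨b, fun r => ?_⟩
  obtain ⟨r, hr, rfl⟩ := LGI_mk_surj r
  obtain ⟨q, c, hq, hc, he⟩ := hb r hr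
  refine ⟨LGI_mk (fun z => q ((π.prod l) z)) (LGI_comp_an hq _), fun i => LGI_mk (c i) (hc i), ?_⟩
  simp only [LGI_pb_mk, LGI_lin, LGI_pow_mk, LGI_mk_mul]
  rw [LGI_sum_mk, LGI_mk_add, LGI_mk_eq]
  filter_upwards [(LGI_tendsto (π.prod l)).eventually he] with z h1
  simp only [ContinuousLinearMap.prod_apply, hz] at h1
  rw [h1]
  simp

/-- Weierstrass polynomial in an ideal, with approximations. -/
theorem LGI_weier_poly (j : W →L[ℝ] E) (v : E) (π : E →L[ℝ] W) (l : E →L[ℝ] ℝ)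
    (hz : ∀ z, j (π z) + l z • v = z) (hπ : π v = 0) (hl : l v = 1) (p : Ideal (LGI_An E))
    (h : LGI_An E) (hp : h ∈ p)
    (hh : LGI_pb (ContinuousLinearMap.toSpanSingleton ℝ v) h ≠ 0) :
    ∃ P ∈ p, ∀ N (r : LGI_An E),
      ∃ a ∈ Subring.closure (Set.range (LGI_pb π) ∪ {LGI_lin l}), r - a ∈ (Ideal.span {P}) ^ N := by
  set Q := Subring.closure (Set.range (LGI_pb π) ∪ {LGI_lin l}) with hQ
  have hlQ : LGI_lin l ∈ Q := Subring.subset_closure (Or.inr rfl)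
  have hπQ : ∀ c, LGI_pb π c ∈ Q := fun c => Subring.subset_closure (Or.inl ⟨c, rfl⟩)
  have hsum : ∀ b (c : Fin b → LGI_An W), ∑ i, LGI_pb π (c i) * LGI_lin l ^ (i : ℕ) ∈ Q :=
    fun b c => Q.sum_mem (fun i _ => Q.mul_mem (hπQ _) (Q.pow_mem hlQ _))
  obtain ⟨b, hb⟩ := LGI_weier_germ j v π l hz h hh
  obtain ⟨q, c, hqc⟩ := hb (LGI_lin l ^ b)
  let P := LGI_lin l ^ b - ∑ i, LGI_pb π (c i) * LGI_lin l ^ (i : ℕ)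
  have hPQ : P ∈ Q := Q.sub_mem (Q.pow_mem hlQ _) (hsum b c)
  have hPp : P ∈ p := by
    have : P = q * h := by simp only [P]; rw [hqc]; ring
    rw [this]; exact p.mul_mem_left _ hp
  have hPnz : LGI_pb (ContinuousLinearMap.toSpanSingleton ℝ v) P ≠ 0 := by
    intro h0
    choose g hg hcg using fun i => LGI_mk_surj (c i)
    simp only [P, hcg, map_sub, map_pow, map_sum, map_mul, LGI_pb_mk, LGI_lin, LGI_pow_mk,
      LGI_mk_mul] at h0
    rw [LGI_sum_mk, LGI_mk_sub] at h0
    change _ = LGI_mk (fun _ => 0) analyticAt_const at h0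
    rw [LGI_mk_eq] at h0
    let pol : Polynomial ℝ := Polynomial.X ^ b -
      ∑ i : Fin b, Polynomial.C (g i 0) * Polynomial.X ^ (i : ℕ)
    have hpol : pol.Monic := by
      refine Polynomial.monic_X_pow_sub ?_
      refine (Polynomial.degree_sum_le _ _).trans_lt ?_
      rw [Finset.sup_lt_iff (by exact WithBot.bot_lt_coe b)]
      intro i _
      exact (Polynomial.degree_C_mul_X_pow_le _ _).trans_lt (by exact_mod_cast i.2)
    have hev : ∀ᶠ s in 𝓝 (0:ℝ), pol.eval s = 0 := by
      filter_upwards [h0] with s hs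
      simp only [pol, Polynomial.eval_sub, Polynomial.eval_pow, Polynomial.eval_X,
        Polynomial.eval_finset_sum, Polynomial.eval_mul, Polynomial.eval_C]
      simpa [hπ, hl] using hs
    have hinf : {s : ℝ | pol.eval s = 0}.Infinite := infinite_of_mem_nhds 0 hev
    exact hpol.ne_zero (Polynomial.eq_zero_of_infinite_isRoot pol hinf)
  refine ⟨P, hPp, ?_⟩
  obtain ⟨b', hb'⟩ := LGI_weier_germ j v π l hz P hPnz
  intro N
  induction N with
  | zero => intro r; exact ⟨0, Q.zero_mem, by simp⟩
  | succ N ih =>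
    intro r
    obtain ⟨q', c', hqc'⟩ := hb' r
    obtain ⟨a, ha, hqa⟩ := ih q'
    refine ⟨a * P + ∑ i, LGI_pb π (c' i) * LGI_lin l ^ (i : ℕ), Q.add_mem (Q.mul_mem ha hPQ) (hsum _ _), ?_⟩
    have : r - (a * P + ∑ i, LGI_pb π (c' i) * LGI_lin l ^ (i : ℕ)) = (q' - a) * P := by
      rw [hqc']; ring
    rw [this, pow_succ]
    exact Ideal.mul_mem_mul hqa (Ideal.mem_span_singleton_self P)
end

end LGI_part_G

section LGI_part_H
open scoped Topology

theorem LGI_noether_choose {E : Type*} [NormedAddCommGroup E] [NormedSpace ℝ E]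
    (h : LGI_An E) (h0 : h ≠ 0) (hu : ¬ IsUnit h) :
    ∃ v : E, v ≠ 0 ∧ LGI_pb (ContinuousLinearMap.toSpanSingleton ℝ v) h ≠ 0 := by
  obtain ⟨f, hf, rfl⟩ := LGI_mk_surj h
  have hf0 : f 0 = 0 := by
    by_contra hne
    exact hu (LGI_isUnit hf hne)
  obtain ⟨ε, hε, hball⟩ := Metric.eventually_nhds_iff_ball.1 hf.eventually_analyticAt
  have : ∃ z ∈ Metric.ball (0:E) ε, f z ≠ 0 := by
    by_contra! hcon
    apply h0
    change _ = LGI_mk (fun _ => 0) analyticAt_const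
    rw [LGI_mk_eq]
    filter_upwards [Metric.ball_mem_nhds (0:E) hε] with z hz using hcon z hz
  obtain ⟨z, hz, hfz⟩ := this
  refine ⟨z, fun h => hfz (h ▸ hf0), ?_⟩
  intro hcon
  rw [LGI_pb_mk] at hcon
  change _ = LGI_mk (fun _ => 0) analyticAt_const at hcon
  rw [LGI_mk_eq] at hcon
  let T := ContinuousLinearMap.toSpanSingleton ℝ z
  have hconv : Convex ℝ (T ⁻¹' Metric.ball (0:E) ε) :=
    (convex_ball (0:E) ε).linear_preimage T.toLinearMap
  have han : AnalyticOnNhd ℝ (fun s => f (T s)) (T ⁻¹' Metric.ball (0:E) ε) := fun s hs =>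
    AnalyticAt.comp (g := f) (f := T) (hball _ hs) (T.analyticAt s)
  have := han.eqOn_zero_of_preconnected_of_eventuallyEq_zero hconv.isPreconnected
    (z₀ := 0) (by simpa using hε) hcon (x := 1) (by simpa [T] using hz)
  apply hfz
  simpa [T] using this

theorem LGI_structure.{u} (n : ℕ) : ∀ (E : Type u) [NormedAddCommGroup E] [NormedSpace ℝ E]
    [FiniteDimensional ℝ E] (_ : Module.finrank ℝ E ≤ n) (p : Ideal (LGI_An E)) (_ : p ≠ ⊤),
    ∃ (S : Type u) (_ : CommRing S) (φ : S →+* LGI_An E) (m : ℕ) (x : Fin m → LGI_An E)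
      (v : Fin m → E) (I : Ideal (LGI_An E)), I.FG ∧ I ≤ p ∧
      (∀ i j, LGI_der (v i) (x j) = if i = j then 1 else 0) ∧
      (∀ i s, LGI_der (v i) (φ s) = 0) ∧ (∀ s, φ s ∈ p → φ s = 0) ∧
      (∀ (N : ℕ) (r : LGI_An E), ∃ G : MvPolynomial (Fin m) S,
        r - MvPolynomial.eval₂Hom φ x G ∈ I ^ N) := by
  induction n with
  | zero => 
    intro E _ _ _ hE p hp
    by_cases hb : p = ⊥
    · exact ⟨LGI_An E, inferInstance, RingHom.id _, 0, Fin.elim0, Fin.elim0, ⊥,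
        Submodule.fg_bot, bot_le, fun i => i.elim0, fun i => i.elim0, fun s hs => by
        simpa [hb] using hs, fun N r => ⟨MvPolynomial.C r, by simp⟩⟩
    · exfalso
      obtain ⟨h, hh, h0⟩ := Submodule.exists_mem_ne_zero_of_ne_bot hb
      obtain ⟨v, hv, -⟩ := LGI_noether_choose h h0 (fun hu => hp (Ideal.eq_top_of_isUnit_mem _ hh hu))
      have : Subsingleton E := Module.finrank_zero_iff.1 (Nat.le_zero.1 hE)
      exact hv (Subsingleton.elim _ _)
  | succ n ih => 
    intro E _ _ _ hE p hp
    by_cases hb : p = ⊥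
    · exact ⟨LGI_An E, inferInstance, RingHom.id _, 0, Fin.elim0, Fin.elim0, ⊥,
        Submodule.fg_bot, bot_le, fun i => i.elim0, fun i => i.elim0, fun s hs => by
        simpa [hb] using hs, fun N r => ⟨MvPolynomial.C r, by simp⟩⟩
    obtain ⟨h, hh, h0⟩ := Submodule.exists_mem_ne_zero_of_ne_bot hb
    obtain ⟨v, hv, hvh⟩ :=
      LGI_noether_choose h h0 (fun hu => hp (Ideal.eq_top_of_isUnit_mem _ hh hu))
    obtain ⟨l, hl⟩ := SeparatingDual.exists_eq_one (R := ℝ) hv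
    let W := LinearMap.ker l.toLinearMap
    let j : W →L[ℝ] E := W.subtypeL
    let π : E →L[ℝ] W := (ContinuousLinearMap.id ℝ E - l.smulRight v).codRestrict W (by
      intro z; simp [W, hl])
    have hπ : π v = 0 := by
      apply Subtype.ext; simp [π, hl]
    have hz : ∀ z, j (π z) + l z • v = z := by
      intro z; simp [π, j]
    have hlj : ∀ w, l (j w) = 0 := fun w => w.2
    have hπj : ∀ w, π (j w) = w := by
      intro w; apply Subtype.ext
      have := hz (j w)
      rw [hlj, zero_smul, add_zero] at this
      exact this
    have hW : Module.finrank ℝ W ≤ n := by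
      have : Module.finrank ℝ W < Module.finrank ℝ E := by
        apply Submodule.finrank_lt
        intro htop
        have : v ∈ W := htop ▸ Submodule.mem_top
        have h1 : l v = 0 := this
        rw [hl] at h1; exact one_ne_zero h1
      omega
    obtain ⟨P, hP, hPN⟩ := LGI_weier_poly j v π l hz hπ hl p h hh hvh
    have hp' : p.comap (LGI_pb π) ≠ ⊤ := Ideal.comap_ne_top _ hp
    obtain ⟨S, iS, φ', m, x', v', I', hI'fg, hI'p, hx', hφ', hS', happ⟩ := ih W hW _ hp'
    refine ⟨S, iS, (LGI_pb π).comp φ', m + 1, Fin.cons (LGI_lin l) (fun i => LGI_pb π (x' i)),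
      Fin.cons v (fun i => j (v' i)), I'.map (LGI_pb π) ⊔ Ideal.span {P}, ?_, ?_, ?_, ?_, ?_, ?_⟩
    · exact Submodule.FG.sup (hI'fg.map _) (Submodule.fg_span_singleton _)
    · refine sup_le (Ideal.map_le_iff_le_comap.2 hI'p) ?_
      rw [Ideal.span_singleton_le_iff_mem]; exact hP
    · intro i k
      refine Fin.cases ?_ (fun i => ?_) i <;> refine Fin.cases ?_ (fun k => ?_) k
      · simp only [Fin.cons_zero, LGI_der_lin, hl, if_true]; rfl
      · simp only [Fin.cons_zero, Fin.cons_succ, LGI_der_pb, hπ, LGI_der_zero, map_zero]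
        rw [if_neg (Fin.succ_ne_zero k).symm]
      · simp only [Fin.cons_zero, Fin.cons_succ, LGI_der_lin, hlj]
        rw [if_neg (Fin.succ_ne_zero i)]; rfl
      · simp only [Fin.cons_succ, LGI_der_pb, hπj, hx', Fin.succ_inj]
        split_ifs <;> simp
    · intro i s
      refine Fin.cases ?_ (fun i => ?_) i
      · simp only [Fin.cons_zero, RingHom.comp_apply, LGI_der_pb, hπ, LGI_der_zero, map_zero]
      · simp only [Fin.cons_succ, RingHom.comp_apply, LGI_der_pb, hπj, hφ', map_zero]
    · intro s hs
      rw [RingHom.comp_apply, hS' s hs, map_zero]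
    · intro N r
      set I := I'.map (LGI_pb π) ⊔ Ideal.span {P} with hI
      set x : Fin (m+1) → LGI_An E := Fin.cons (LGI_lin l) (fun i => LGI_pb π (x' i)) with hx
      obtain ⟨a, ha, hra⟩ := hPN N r
      have key : ∃ G : MvPolynomial (Fin (m+1)) S,
          a - MvPolynomial.eval₂Hom ((LGI_pb π).comp φ') x G ∈ I ^ N := by
        clear hra
        induction ha using Subring.closure_induction with
        | mem y hy =>
          rcases hy with ⟨c, rfl⟩ | rfl
          · obtain ⟨G, hG⟩ := happ N c
            refine ⟨MvPolynomial.rename Fin.succ G, ?_⟩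
            have h1 := Ideal.mem_map_of_mem (LGI_pb π) hG
            rw [Ideal.map_pow, map_sub] at h1
            have h2 := Ideal.pow_right_mono (le_sup_left : I'.map (LGI_pb π) ≤ I) N h1
            convert h2 using 2
            simp only [MvPolynomial.coe_eval₂Hom, MvPolynomial.eval₂_rename]
            rw [MvPolynomial.hom_eval₂]
            rfl
          · exact ⟨MvPolynomial.X 0, by simp [hx]⟩
        | zero => exact ⟨0, by simp⟩
        | one => exact ⟨1, by simp⟩
        | add y z _ _ hy hz =>
          obtain ⟨G, hG⟩ := hy
          obtain ⟨H, hH⟩ := hz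
          refine ⟨G + H, ?_⟩
          have := Ideal.add_mem _ hG hH
          rw [map_add]
          convert this using 1; ring
        | neg y _ hy =>
          obtain ⟨G, hG⟩ := hy
          refine ⟨-G, ?_⟩
          have := Ideal.neg_mem_iff _ |>.2 hG
          rw [map_neg]
          convert this using 1; ring
        | mul y z _ _ hy hz =>
          obtain ⟨G, hG⟩ := hy
          obtain ⟨H, hH⟩ := hz
          refine ⟨G * H, ?_⟩
          have := Ideal.add_mem _ (Ideal.mul_mem_left _ z hG)
            (Ideal.mul_mem_left _ (MvPolynomial.eval₂Hom ((LGI_pb π).comp φ') x G) hH)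
          rw [map_mul]
          convert this using 1; ring
      obtain ⟨G, hG⟩ := key
      refine ⟨G, ?_⟩
      have h2 := Ideal.pow_right_mono (le_sup_right : Ideal.span {P} ≤ I) N hra
      have := Ideal.add_mem _ h2 hG
      convert this using 1; ring

end LGI_part_H

section LGI_part_I

theorem LGI_der_pow {A : Type*} [CommRing A] (D : Derivation ℤ A A) (I : Ideal A) (N : ℕ) :
    ∀ a ∈ I ^ (N + 1), D a ∈ I ^ N := by
  induction N with
  | zero => intro a _; simp
  | succ N ih =>
    intro a ha
    rw [pow_succ] at ha
    refine Submodule.mul_induction_on ha ?_ ?_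
    · intro y hy z hz
      rw [D.leibniz, smul_eq_mul, smul_eq_mul]
      refine Ideal.add_mem _ (Ideal.mul_mem_right _ _ hy) ?_
      rw [pow_succ']
      exact Ideal.mul_mem_mul hz (ih y hy)
    · intro y z hy hz
      rw [map_add]; exact Ideal.add_mem _ hy hz

theorem LGI_der_eval {A S : Type*} [CommRing A] [CommRing S] {m : ℕ} (φ : S →+* A)
    (x : Fin m → A) (D : Derivation ℤ A A) (i : Fin m)
    (hx : ∀ j, D (x j) = if i = j then 1 else 0) (hφ : ∀ s, D (φ s) = 0)
    (G : MvPolynomial (Fin m) S) :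
    D (MvPolynomial.eval₂Hom φ x G) = MvPolynomial.eval₂Hom φ x (MvPolynomial.pderiv i G) := by
  induction G using MvPolynomial.induction_on with
  | C a => simp [hφ]
  | add p q hp hq => simp only [map_add, hp, hq]
  | mul_X p j hp =>
    rw [map_mul, D.leibniz, hp, Derivation.leibniz, MvPolynomial.pderiv_X]
    simp only [MvPolynomial.eval₂Hom_X', hx, smul_eq_mul, map_add, map_mul]
    by_cases h : i = j
    · subst h; simp
    · rw [if_neg h, Pi.single_eq_of_ne' h]; simp

theorem LGI_final_alg {A K S : Type*} [CommRing A] [Field K] [CharZero K] [CommRing S]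
    (O : ValuationSubring K) (Φ : A →+* O) (f : A) (hf0 : Φ f ≠ 0) (hfm : ¬ IsUnit (Φ f))
    (harch : ∀ z : O, ¬ IsUnit z → ∃ n : ℕ, Φ f ∣ z ^ n)
    (m : ℕ) (D : Fin m → Derivation ℤ A A) (hD : ∀ j, Φ f ∣ Φ (D j f))
    (φ : S →+* A) (x : Fin m → A) (I : Ideal A) (hI : I.FG)
    (hIp : I ≤ (IsLocalRing.maximalIdeal O).comap Φ)
    (hx : ∀ i j, D i (x j) = if i = j then 1 else 0) (hφ : ∀ i s, D i (φ s) = 0)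
    (hS : ∀ s, φ s ∈ (IsLocalRing.maximalIdeal O).comap Φ → φ s = 0)
    (happ : ∀ (N : ℕ) (r : A), ∃ G : MvPolynomial (Fin m) S,
        r - MvPolynomial.eval₂Hom φ x G ∈ I ^ N) : False := by
  have hrad : I ≤ ((Ideal.span {Φ f ^ 2}).comap Φ).radical := by
    intro a ha
    obtain ⟨n, c, hc⟩ := harch (Φ a) (by simpa using hIp ha)
    refine ⟨n * 2, ?_⟩
    rw [Ideal.mem_comap, Ideal.mem_span_singleton, map_pow, pow_mul, hc]
    exact ⟨c ^ 2, by ring⟩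
  obtain ⟨N, hN⟩ := Ideal.exists_pow_le_of_le_radical_of_fg hrad hI
  obtain ⟨G, hG⟩ := happ (N + 1) f
  set e := MvPolynomial.eval₂Hom φ x G with he
  have h1 : Φ f ^ 2 ∣ Φ (f - e) := by
    have := hN (Ideal.pow_le_pow_right (Nat.le_succ N) hG)
    rwa [Ideal.mem_comap, Ideal.mem_span_singleton] at this
  have h2 : ∀ j, Φ f ^ 2 ∣ Φ (D j (f - e)) := by
    intro j
    have := hN (LGI_der_pow (D j) I N _ hG)
    rwa [Ideal.mem_comap, Ideal.mem_span_singleton] at this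
  obtain ⟨c, hc⟩ := h1
  choose d hd using hD
  choose c' hc' using h2
  have hu : IsUnit (1 - Φ f * c) := by
    by_contra hcon
    have h3 : Φ f * c ∈ IsLocalRing.maximalIdeal O :=
      Ideal.mul_mem_right _ _ hfm
    have := Ideal.add_mem _ ((IsLocalRing.mem_maximalIdeal _).2 hcon) h3
    rw [sub_add_cancel] at this
    exact (Ideal.ne_top_iff_one _).1 (Ideal.IsPrime.ne_top inferInstance) this
  obtain ⟨u, hu⟩ := hu
  have hγ : Φ e = Φ f * u := by
    rw [hu]; rw [map_sub] at hc; linear_combination -hc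
  have hDe : ∀ j, Φ (D j e) = Φ e * (↑u⁻¹ * (d j - Φ f * c' j)) := by
    intro j
    have := hc' j
    rw [map_sub, map_sub, hd] at this
    have hui : (u : O) * ↑u⁻¹ = 1 := by simp
    rw [hγ]
    linear_combination (-1 : O) * this - (Φ f * (d j - Φ f * c' j)) * hui
  let ψ : S →+* K := (O.subtype.comp Φ).comp φ
  let F : Subfield K := Subfield.closure (Set.range ψ)
  have hFO : ∀ y ∈ F, y ∈ O := by
    intro y hy
    obtain ⟨a, ha, b, hb, rfl⟩ := Subfield.mem_closure_iff.1 hy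
    rw [← RingHom.coe_range, Subring.closure_eq] at ha hb
    obtain ⟨s, rfl⟩ := ha
    obtain ⟨t, rfl⟩ := hb
    have hs : ψ s ∈ O := (Φ (φ s)).2
    by_cases ht : φ t ∈ (IsLocalRing.maximalIdeal O).comap Φ
    · have : ψ t = 0 := by simp [ψ, hS t ht]
      rw [this, div_zero]; exact O.zero_mem
    · have hun : IsUnit (Φ (φ t)) := by simpa using ht
      obtain ⟨w, hw⟩ := hun
      have hw2 : ψ t * ((↑w⁻¹ : O) : K) = 1 := by
        have : (w : O) * ↑w⁻¹ = 1 := by simp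
        rw [hw] at this
        exact congrArg O.subtype this
      rw [div_eq_mul_inv, inv_eq_of_mul_eq_one_right hw2]
      exact O.mul_mem _ _ hs (↑w⁻¹ : O).2
  let ψF : S →+* F := ψ.codRestrict F (fun s => Subfield.subset_closure ⟨s, rfl⟩)
  let G' := MvPolynomial.map ψF G
  let xK : Fin m → K := fun i => (Φ (x i) : K)
  have hev : ∀ H : MvPolynomial (Fin m) S,
      MvPolynomial.aeval xK (MvPolynomial.map ψF H) = (Φ (MvPolynomial.eval₂Hom φ x H) : K) := by
    intro H
    have : (Φ (MvPolynomial.eval₂Hom φ x H) : K) =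
      (O.subtype.comp Φ) (MvPolynomial.eval₂ φ x H) := rfl
    rw [this, MvPolynomial.hom_eval₂, MvPolynomial.aeval_def, MvPolynomial.eval₂_map]
    rfl
  have hγ0 : Φ e ≠ 0 := by
    rw [hγ]; exact mul_ne_zero hf0 u.ne_zero
  let b : Fin m → O := fun j => ↑u⁻¹ * (d j - Φ f * c' j)
  have hPL := LGI_PL (F := F) xK (fun j => (b j : K)) G' (Φ e : K) (hev G)
    (by simpa using hγ0) (by
      intro j
      have : MvPolynomial.pderiv j G' = MvPolynomial.map ψF (MvPolynomial.pderiv j G) :=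
        MvPolynomial.pderiv_map
      rw [this, hev, ← LGI_der_eval φ x (D j) j (hx j) (hφ j), ← he, hDe]
      rfl)
  have hinO : (Φ e : K)⁻¹ ∈ O := by
    refine Algebra.adjoin_induction (p := fun y _ => y ∈ O) ?_ ?_ ?_ ?_ hPL
    · rintro y (⟨i, rfl⟩ | ⟨i, rfl⟩)
      · exact (Φ (x i)).2
      · exact (b i).2
    · intro r; exact hFO _ r.2
    · intro y z _ _ hy hz; exact O.add_mem _ _ hy hz
    · intro y z _ _ hy hz; exact O.mul_mem _ _ hy hz
  apply hfm
  refine IsUnit.of_mul_eq_one (u * ⟨_, hinO⟩) ?_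
  rw [← mul_assoc, ← hγ]
  apply Subtype.ext
  exact mul_inv_cancel₀ (by simpa using hγ0)

end LGI_part_I


/-- the valuation ring of elements of polynomially bounded growth -/
def LGI_O {K : Type*} [Field K] [LinearOrder K] [IsStrictOrderedRing K] (φ : K) (h0 : 0 < φ)
    (h1 : φ ≤ 1) (h2 : ∀ n : ℕ, 2 ^ n * φ ≤ 1) : ValuationSubring K :=
  have hmul : ∀ a b : K, (∀ n : ℕ, |a| ^ n * φ ≤ 1) → (∀ n : ℕ, |b| ^ n * φ ≤ 1) →
      ∀ n : ℕ, |a * b| ^ n * φ ≤ 1 := by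
    intro a b ha hb n
    rw [← abs_of_nonneg (zero_le_one (α := K)), ← abs_of_nonneg (show 0 ≤ |a * b| ^ n * φ by positivity)]
    rw [← sq_le_sq, one_pow]
    have hA := ha (2 * n)
    have hB := hb (2 * n)
    have : (|a * b| ^ n * φ) ^ 2 = (|a| ^ (2 * n) * φ) * (|b| ^ (2 * n) * φ) := by
      rw [abs_mul]; ring
    rw [this]
    exact mul_le_one₀ hA (by positivity) hB
  have hmono : ∀ a b : K, |a| ≤ |b| → (∀ n : ℕ, |b| ^ n * φ ≤ 1) → ∀ n : ℕ, |a| ^ n * φ ≤ 1 := by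
    intro a b hab hb n
    refine le_trans ?_ (hb n)
    gcongr
  have hone : ∀ a : K, |a| ≤ 1 → ∀ n : ℕ, |a| ^ n * φ ≤ 1 := by
    intro a ha n
    exact mul_le_one₀ (pow_le_one₀ (abs_nonneg a) ha) h0.le h1
  have htwo : ∀ n : ℕ, |(2:K)| ^ n * φ ≤ 1 := by simpa using h2
  { carrier := {z | ∀ n : ℕ, |z| ^ n * φ ≤ 1}
    mul_mem' := fun {a b} ha hb => hmul a b ha hb
    one_mem' := hone 1 (by simp)
    zero_mem' := hone 0 (by simp)
    neg_mem' := fun {a} ha => by simpa using ha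
    add_mem' := by
      intro a b ha hb
      rcases le_total |a| |b| with h | h
      · refine hmono _ (2 * b) ?_ (hmul _ _ htwo hb)
        rw [abs_mul, abs_two]
        linarith [abs_add_le a b]
      · refine hmono _ (2 * a) ?_ (hmul _ _ htwo ha)
        rw [abs_mul, abs_two]
        linarith [abs_add_le a b]
    mem_or_inv_mem' := by
      intro a
      rcases le_total |a| 1 with h | h
      · exact Or.inl (hone a h)
      · refine Or.inr (hone _ ?_)
        rw [abs_inv]; exact inv_le_one_of_one_le₀ h }

theorem LGI_mem_O {K : Type*} [Field K] [LinearOrder K] [IsStrictOrderedRing K] {φ : K} {h0 : 0 < φ}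
    {h1 : φ ≤ 1} {h2 : ∀ n : ℕ, 2 ^ n * φ ≤ 1} (z : K) :
    z ∈ LGI_O φ h0 h1 h2 ↔ ∀ n : ℕ, |z| ^ n * φ ≤ 1 := Iff.rfl

theorem LGI_O_le_one {K : Type*} [Field K] [LinearOrder K] [IsStrictOrderedRing K] {φ : K} {h0 : 0 < φ}
    {h1 : φ ≤ 1} {h2 : ∀ n : ℕ, 2 ^ n * φ ≤ 1} (z : K) (hz : |z| ≤ 1) :
    z ∈ LGI_O φ h0 h1 h2 := fun _ => mul_le_one₀ (pow_le_one₀ (abs_nonneg z) hz) h0.le h1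

/-- evaluation of germs along a sequence -/
noncomputable def LGI_ev {E : Type*} [NormedAddCommGroup E] [NormedSpace ℝ E] (y : ℕ → E)
    (hy : Filter.Tendsto y (Filter.hyperfilter ℕ : Filter ℕ) (𝓝 0)) :
    LGI_An E →+* Filter.Germ (Filter.hyperfilter ℕ : Filter ℕ) ℝ where
  toFun γ := (γ : Filter.Germ (𝓝 (0 : E)) ℝ).compTendsto y hy
  map_one' := rfl
  map_zero' := rfl
  map_mul' := by
    intro a b
    obtain ⟨f, hf, rfl⟩ := LGI_mk_surj a
    obtain ⟨g, hg, rfl⟩ := LGI_mk_surj b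
    rfl
  map_add' := by
    intro a b
    obtain ⟨f, hf, rfl⟩ := LGI_mk_surj a
    obtain ⟨g, hg, rfl⟩ := LGI_mk_surj b
    rfl

theorem LGI_germ_le (F h : ℕ → ℝ) (n : ℕ) :
    |(h : Filter.Germ (Filter.hyperfilter ℕ : Filter ℕ) ℝ)| ^ n *
      |(F : Filter.Germ (Filter.hyperfilter ℕ : Filter ℕ) ℝ)| ≤ 1 ↔
    ∀ᶠ k in (Filter.hyperfilter ℕ : Filter ℕ), |h k| ^ n * |F k| ≤ 1 := by
  rw [Filter.Germ.abs_def, Filter.Germ.abs_def]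
  exact Iff.rfl

theorem LGI_no_seq {E : Type*} [NormedAddCommGroup E] [NormedSpace ℝ E] [FiniteDimensional ℝ E]
    (f : E → ℝ) (hf : AnalyticAt ℝ f 0) (hf0 : f 0 = 0) (y : ℕ → E)
    (hy : Filter.Tendsto y Filter.atTop (𝓝 0))
    (hbad : ∀ k : ℕ, ‖fderiv ℝ f (y k)‖ < |f (y k)| ^ (1 - 1 / ((k : ℝ) + 2))) : False := by
  have hexp : ∀ k : ℕ, 0 < 1 - 1 / ((k : ℝ) + 2) := by
    intro k
    have : 1 / ((k : ℝ) + 2) < 1 := by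
      rw [div_lt_one (by positivity)]
      have : (0:ℝ) ≤ k := by positivity
      linarith
    linarith
  have hne : ∀ k, f (y k) ≠ 0 := by
    intro k hk
    have := hbad k
    rw [hk, abs_zero, Real.zero_rpow (hexp k).ne'] at this
    exact absurd this (not_lt.2 (norm_nonneg _))
  have hle : (Filter.hyperfilter ℕ : Filter ℕ) ≤ Filter.atTop := Nat.hyperfilter_le_atTop
  have hyU := hy.mono_left hle
  have hFt : Filter.Tendsto (fun k => |f (y k)|) Filter.atTop (𝓝 0) := by
    have := (hf.continuousAt.tendsto.comp hy).abs
    rw [hf0, abs_zero] at this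
    exact this
  let F : ℕ → ℝ := fun k => f (y k)
  let K := Filter.Germ (Filter.hyperfilter ℕ : Filter ℕ) ℝ
  let FK : K := (F : K)
  have hconst : ∀ C : ℝ, ∀ n : ℕ, ∀ᶠ k in (Filter.hyperfilter ℕ : Filter ℕ),
      |C| ^ n * |F k| ≤ 1 := by
    intro C n
    have h1 : Filter.Tendsto (fun k => |C| ^ n * |F k|) Filter.atTop (𝓝 (|C| ^ n * 0)) :=
      hFt.const_mul _
    rw [mul_zero] at h1
    exact hle ((h1.eventually_lt_const one_pos).mono fun k hk => hk.le)
  have hFK0 : FK ≠ 0 := by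
    intro h
    have h' : F =ᶠ[(Filter.hyperfilter ℕ : Filter ℕ)] fun _ => 0 := Filter.Germ.coe_eq.1 h
    obtain ⟨k, hk⟩ := h'.exists
    exact hne k hk
  have h0 : 0 < |FK| := abs_pos.2 hFK0
  have h1 : |FK| ≤ 1 := by
    have := (LGI_germ_le F (fun _ => 1) 0).2 (hconst 1 0)
    simpa using this
  have h2 : ∀ n : ℕ, 2 ^ n * |FK| ≤ 1 := by
    intro n
    have := (LGI_germ_le F (fun _ => 2) n).2 (hconst 2 n)
    have h3 : ((fun _ => (2:ℝ) : ℕ → ℝ) : K) = 2 := rfl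
    rw [h3, abs_two] at this
    exact this
  have hlt : |FK| < 1 := by
    have := h2 1
    rw [pow_one] at this
    linarith
  let O : ValuationSubring K := LGI_O |FK| h0 h1 h2
  have hmemO : ∀ h : ℕ → ℝ, (h : K) ∈ O ↔ ∀ n : ℕ, ∀ᶠ k in (Filter.hyperfilter ℕ : Filter ℕ),
      |h k| ^ n * |F k| ≤ 1 := by
    intro h
    rw [LGI_mem_O]
    exact forall_congr' fun n => LGI_germ_le F h n
  have hbdd : ∀ γ, LGI_ev y hyU γ ∈ O := by
    intro γ
    obtain ⟨h, hh, rfl⟩ := LGI_mk_surj γ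
    have : LGI_ev y hyU (LGI_mk h hh) = ((fun k => h (y k) : ℕ → ℝ) : K) := rfl
    rw [this, hmemO]
    intro n
    have hb : ∀ᶠ k in (Filter.hyperfilter ℕ : Filter ℕ), |h (y k)| < |h 0| + 1 :=
      ((hh.continuousAt.tendsto.comp hyU).abs).eventually_lt_const (by simp)
    filter_upwards [hb, hconst (|h 0| + 1) n] with k hk1 hk2
    refine le_trans ?_ hk2
    have hk3 : |h (y k)| ≤ |(|h 0| + 1)| := hk1.le.trans (le_abs_self _)
    exact mul_le_mul_of_nonneg_right (pow_le_pow_left₀ (abs_nonneg _) hk3 n) (abs_nonneg _)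
  let Φ : LGI_An E →+* O := (LGI_ev y hyU).codRestrict O hbdd
  let γ := LGI_mk f hf
  have hΦγ : ((Φ γ : O) : K) = FK := rfl
  have hdvd : ∀ z : O, (z : K) / FK ∈ O → Φ γ ∣ z := by
    intro z hz
    refine ⟨⟨_, hz⟩, ?_⟩
    apply Subtype.ext
    exact (mul_div_cancel₀ (z : K) hFK0).symm
  have hnu : ¬ IsUnit (Φ γ) := by
    rintro ⟨u, hu⟩
    have h3 : (u : O) * ↑u⁻¹ = 1 := by simp
    rw [hu] at h3
    have h4 : FK * ((↑u⁻¹ : O) : K) = 1 := congrArg O.subtype h3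
    have h5 := (↑u⁻¹ : O).2
    rw [← inv_eq_of_mul_eq_one_right h4] at h5
    have h6 := (LGI_mem_O _).1 h5 2
    rw [abs_inv] at h6
    have h7 : |FK|⁻¹ ^ 2 * |FK| = |FK|⁻¹ := by
      rw [pow_two, mul_assoc, inv_mul_cancel₀ h0.ne', mul_one]
    rw [h7] at h6
    exact absurd h6 (not_le.2 ((one_lt_inv₀ h0).2 hlt))
  have harch : ∀ z : O, ¬ IsUnit z → ∃ n : ℕ, Φ γ ∣ z ^ n := by
    intro z hz
    by_cases hz0 : (z : K) = 0
    · refine ⟨1, ?_⟩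
      have : z = 0 := Subtype.ext hz0
      rw [this, pow_one]; exact dvd_zero _
    have hinv : (z : K)⁻¹ ∉ O := by
      intro h
      exact hz (IsUnit.of_mul_eq_one ⟨_, h⟩ (Subtype.ext (mul_inv_cancel₀ hz0)))
    rw [LGI_mem_O] at hinv
    push Not at hinv
    obtain ⟨n, hn⟩ := hinv
    refine ⟨n, hdvd _ (LGI_O_le_one _ ?_)⟩
    change |(z : K) ^ n / FK| ≤ 1
    rw [abs_div, abs_pow, div_le_one h0]
    rw [abs_inv, inv_pow, inv_mul_eq_div, one_lt_div (by positivity)] at hn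
    exact hn.le
  have hder : ∀ v : E, Φ γ ∣ Φ (LGI_der v γ) := by
    intro v
    refine hdvd _ ?_
    have h3 : ((Φ (LGI_der v γ) : O) : K) / FK =
        ((fun k => fderiv ℝ f (y k) v / F k : ℕ → ℝ) : K) := by
      have : Φ (LGI_der v γ) = Φ (LGI_mk _ (LGI_der_an hf v)) := by rw [LGI_der_mk]
      rw [this]; rfl
    rw [h3]
    have h4 : (((fun k => ‖v‖ * (‖fderiv ℝ f (y k)‖ / |F k|)) : ℕ → ℝ) : K) ∈ O := by
      have h5 : (((fun k => ‖v‖ * (‖fderiv ℝ f (y k)‖ / |F k|)) : ℕ → ℝ) : K) =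
        ((fun _ => ‖v‖ : ℕ → ℝ) : K) * ((fun k => ‖fderiv ℝ f (y k)‖ / |F k| : ℕ → ℝ) : K) := rfl
      rw [h5]
      refine O.mul_mem _ _ ((hmemO _).2 (hconst _)) ((hmemO _).2 ?_)
      intro n
      filter_upwards [hle (hFt.eventually_lt_const one_pos),
        hle (Filter.eventually_ge_atTop n)] with k hk1 hk2
      have hpos : 0 < |F k| := abs_pos.2 (hne k)
      have hk1' : |F k| ≤ 1 := le_of_lt hk1
      rw [abs_of_nonneg (by positivity)]
      have h6 : ‖fderiv ℝ f (y k)‖ / |F k| ≤ |F k| ^ (- (1 / ((k : ℝ) + 2))) := by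
        rw [div_le_iff₀ hpos, ← Real.rpow_add_one hpos.ne']
        refine (hbad k).le.trans (le_of_eq ?_)
        congr 1; ring
      calc (‖fderiv ℝ f (y k)‖ / |F k|) ^ n * |F k|
          ≤ (|F k| ^ (- (1 / ((k : ℝ) + 2)))) ^ n * |F k| := by gcongr
        _ = |F k| ^ (- (1 / ((k : ℝ) + 2)) * n + 1) := by
          rw [Real.rpow_add_one hpos.ne', Real.rpow_mul_natCast hpos.le]
        _ ≤ 1 := by
          refine Real.rpow_le_one hpos.le hk1' ?_
          have : (n : ℝ) ≤ k := by exact_mod_cast hk2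
          have h7 : 1 / ((k : ℝ) + 2) * n ≤ 1 := by
            rw [one_div_mul_eq_div, div_le_one (by positivity)]; linarith
          linarith
    rw [hmemO] at h4 ⊢
    intro n
    filter_upwards [h4 n] with k hk
    refine le_trans ?_ hk
    refine mul_le_mul_of_nonneg_right (pow_le_pow_left₀ (abs_nonneg _) ?_ n) (abs_nonneg _)
    rw [abs_div]
    refine le_trans ?_ (le_abs_self _)
    rw [← mul_div_assoc]
    gcongr
    rw [mul_comm]
    exact (fderiv ℝ f (y k)).le_opNorm v
  obtain ⟨S, iS, φ, m, x, v, I, hI, hIp, hx, hφ, hS, happ⟩ := LGI_structure (Module.finrank ℝ E) E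
    le_rfl ((IsLocalRing.maximalIdeal O).comap Φ)
    (Ideal.comap_ne_top _ (Ideal.IsPrime.ne_top inferInstance))
  refine LGI_final_alg O Φ γ ?_ hnu harch m (fun i => LGI_der (v i)) (fun i => hder _) φ x I hI hIp
    hx hφ hS happ
  intro h
  exact hFK0 (congrArg O.subtype h)

/-- Łojasiewicz gradient inequality for a real-analytic function near a critical point. -/
theorem lojasiewicz_gradient_inequality
    {E : Type*} [NormedAddCommGroup E] [InnerProductSpace ℝ E] [FiniteDimensional ℝ E]
    (U : Set E) (hU : IsOpen U) (g : E → ℝ) (hg : AnalyticOnNhd ℝ g U)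
    (x : E) (hx : x ∈ U) (hcrit : gradient g x = 0) :
    ∃ V ∈ 𝓝 x, V ⊆ U ∧ ∃ a : ℝ, 0 < a ∧ ∃ θ : ℝ, 1/2 ≤ θ ∧ θ < 1 ∧
      ∀ y ∈ V, a * |g x - g y| ^ θ ≤ ‖gradient g y‖ := by
  by_contra hcon
  have hk : ∀ k : ℕ, ∃ y ∈ Metric.ball x (1 / ((k : ℝ) + 1)),
      ‖gradient g y‖ < |g x - g y| ^ (1 - 1 / ((k : ℝ) + 2)) := by
    intro k
    by_contra! h
    refine hcon ⟨Metric.ball x (1 / ((k : ℝ) + 1)) ∩ U, Filter.inter_mem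
      (Metric.ball_mem_nhds _ (by positivity)) (hU.mem_nhds hx), Set.inter_subset_right, 1, one_pos,
      1 - 1 / ((k : ℝ) + 2), ?_, ?_, ?_⟩
    · have : 1 / ((k : ℝ) + 2) ≤ 1 / 2 := by
        apply one_div_le_one_div_of_le <;> [norm_num; skip]
        have : (0:ℝ) ≤ k := by positivity
        linarith
      linarith
    · have : 0 < 1 / ((k : ℝ) + 2) := by positivity
      linarith
    · intro y hy
      rw [one_mul]; exact h y hy.1
  choose y hyb hy using hk
  refine LGI_no_seq (fun z => g (x + z) - g x) ?_ (by simp) (fun k => y k - x) ?_ ?_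
  · have h1 : AnalyticAt ℝ (fun z : E => x + z) 0 := analyticAt_const.add analyticAt_id
    have h2 : AnalyticAt ℝ g (x + 0) := by rw [add_zero]; exact hg x hx
    exact (h2.comp h1).sub analyticAt_const
  · rw [tendsto_zero_iff_norm_tendsto_zero]
    refine squeeze_zero (fun _ => norm_nonneg _) (fun k => ?_)
      tendsto_one_div_add_atTop_nhds_zero_nat
    have := hyb k
    rw [Metric.mem_ball, dist_eq_norm] at this
    exact this.le
  · intro k
    have h1 : fderiv ℝ (fun z => g (x + z) - g x) (y k - x) = fderiv ℝ g (y k) := by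
      rw [fderiv_sub_const, fderiv_comp_add_left, add_sub_cancel]
    rw [h1]
    have h2 : ‖gradient g (y k)‖ = ‖fderiv ℝ g (y k)‖ := by
      rw [gradient, LinearIsometryEquiv.norm_map]
    have := hy k
    rw [h2, abs_sub_comm] at this
    simpa using this
end
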